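/- arXiv:1212.2107 — 2 statements merged into one kernel-verified Lean document; each statement's English description precedes it below -/
import Mathlib

section
/- There is a universal constant C ∈ (0,∞) such that for every p, q ∈ [1,∞), every Banach space (X,‖·‖_X), and every smooth compactly supported f : ℍ(ℝ) → X, (∫₀^∞ t^{q/2−1} ‖Q_t * f‖_{L_p(ℍ(ℝ),X)}^q dt)^{1/q} ≤ C (∫₀^∞ t^{q−1} ‖Q_t * ∇_ℍ f‖_{L_p(ℍ(ℝ),ℓ_p²(X))}^q dt)^{1/q}. -/
open MeasureTheory

/-- The real Heisenberg group `ℍ(ℝ)`, identified with `ℝ³`; the Lebesgue measure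
(`volume`) is a Haar measure for the Heisenberg group structure. -/
abbrev HR : Type := ℝ × ℝ × ℝ

namespace HR

/-- Right translation by the central element `c^t`: `h ↦ h·c^t`. -/
def vmul (t : ℝ) (h : HR) : HR := (h.1, h.2.1, h.2.2 + t)

/-- The Poisson kernel `P_t(u) = t/(π(t²+u²))` on `ℝ`. -/
noncomputable def Pker (t u : ℝ) : ℝ := t / (Real.pi * (t ^ 2 + u ^ 2))

/-- `Q_t(u) = ∂P_t/∂t(u) = (u²−t²)/(π(t²+u²)²)`. -/
noncomputable def Qker (t u : ℝ) : ℝ := (u ^ 2 - t ^ 2) / (Real.pi * (t ^ 2 + u ^ 2) ^ 2)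

variable {X : Type*} [NormedAddCommGroup X] [NormedSpace ℝ X]

/-- Convolution of a kernel `ψ : ℝ → ℝ` with `g : ℍ(ℝ) → X` along the center:
`(ψ*g)(x,y,z) = ∫_ℝ ψ(u) g(x,y,z−u) du`. -/
noncomputable def conv (ψ : ℝ → ℝ) (g : HR → X) (h : HR) : X :=
  ∫ u : ℝ, ψ u • g (h.1, h.2.1, h.2.2 - u)

/-- The left-invariant horizontal derivative `∂_a f = ∂f/∂x`. -/
noncomputable def da (f : HR → X) (h : HR) : X := fderiv ℝ f h (1, 0, 0)

/-- The left-invariant horizontal derivative `∂_b f = ∂f/∂y + x·∂f/∂z`. -/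
noncomputable def db (f : HR → X) (h : HR) : X :=
  fderiv ℝ f h (0, 1, 0) + h.1 • fderiv ℝ f h (0, 0, 1)

end HR

namespace HR

open Set Filter Topology FourierTransform

section PoissonKernel

theorem Pker_nonneg {t : ℝ} (ht : 0 < t) (u : ℝ) : 0 ≤ Pker t u := by
  unfold Pker; positivity

theorem continuous_Pker {t : ℝ} (ht : 0 < t) : Continuous (Pker t) := by
  unfold Pker
  refine continuous_const.div (by fun_prop) fun u => ?_
  positivity

theorem continuous_Qker {t : ℝ} (ht : 0 < t) : Continuous (Qker t) := by
  unfold Qker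
  refine Continuous.div (by fun_prop) (by fun_prop) fun u => ?_
  positivity

theorem measurable_Qker : Measurable fun x : ℝ × ℝ => Qker x.1 x.2 := by
  unfold Qker; fun_prop

theorem Pker_eq_scaled {t : ℝ} (ht : 0 < t) (u : ℝ) :
    Pker t u = (Real.pi * t)⁻¹ * (1 + (t⁻¹ * u) ^ 2)⁻¹ := by
  unfold Pker
  have : t ^ 2 + u ^ 2 ≠ 0 := by positivity
  have : 1 + (t⁻¹ * u) ^ 2 ≠ 0 := by positivity
  field_simp

theorem integrable_Pker {t : ℝ} (ht : 0 < t) : Integrable (Pker t) := by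
  have h := (integrable_inv_one_add_sq.comp_mul_left' (inv_ne_zero ht.ne')).const_mul
    (Real.pi * t)⁻¹
  exact h.congr (.of_forall fun u => (Pker_eq_scaled ht u).symm)

theorem integral_Pker {t : ℝ} (ht : 0 < t) : ∫ u, Pker t u = 1 := by
  simp_rw [Pker_eq_scaled ht]
  rw [integral_const_mul, Measure.integral_comp_mul_left (fun x => (1 + x ^ 2)⁻¹),
    integral_univ_inv_one_add_sq, inv_inv, abs_of_pos ht, smul_eq_mul]
  field_simp

theorem Pker_le {t : ℝ} (ht : 0 < t) (u : ℝ) : |Pker t u| ≤ (Real.pi * t)⁻¹ := by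
  rw [abs_of_nonneg (Pker_nonneg ht u), Pker_eq_scaled ht]
  refine mul_le_of_le_one_right (by positivity) (inv_le_one_of_one_le₀ ?_)
  nlinarith [sq_nonneg (t⁻¹ * u)]

theorem abs_Qker_le {t : ℝ} (ht : 0 < t) (u : ℝ) : |Qker t u| ≤ t⁻¹ * Pker t u := by
  have h0 : 0 < t ^ 2 + u ^ 2 := by positivity
  have h1 : t⁻¹ * Pker t u = (t ^ 2 + u ^ 2) / (Real.pi * (t ^ 2 + u ^ 2) ^ 2) := by
    unfold Pker; field_simp
  rw [h1, Qker, abs_div, abs_of_pos (by positivity : 0 < Real.pi * (t ^ 2 + u ^ 2) ^ 2)]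
  gcongr
  rw [abs_le]; constructor <;> nlinarith [sq_nonneg t, sq_nonneg u]

theorem integrable_Qker {t : ℝ} (ht : 0 < t) : Integrable (Qker t) :=
  ((integrable_Pker ht).const_mul t⁻¹).mono' (continuous_Qker ht).aestronglyMeasurable
    (.of_forall fun u => abs_Qker_le ht u)

theorem integral_abs_Qker_le {t : ℝ} (ht : 0 < t) : ∫ u, |Qker t u| ≤ t⁻¹ := by
  refine (integral_mono (integrable_Qker ht).abs ((integrable_Pker ht).const_mul t⁻¹)
    (abs_Qker_le ht)).trans ?_
  rw [integral_const_mul, integral_Pker ht, mul_one]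

theorem integrable_Pker_one_mul_sqrt : Integrable fun u => Pker 1 u * √|u| := by
  have h := (integrable_rpow_neg_one_add_norm_sq (E := ℝ) (μ := volume) (r := 3 / 2)
    (by norm_num)).const_mul Real.pi⁻¹
  refine h.mono' ((continuous_Pker one_pos).mul (by fun_prop)).aestronglyMeasurable
    (.of_forall fun u => ?_)
  have h0 : (0 : ℝ) < 1 + u ^ 2 := by positivity
  rw [Real.norm_of_nonneg (mul_nonneg (Pker_nonneg one_pos u) (Real.sqrt_nonneg _)),
    Pker_eq_scaled one_pos, Real.norm_eq_abs, sq_abs, inv_one, one_mul, mul_one, mul_assoc]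
  gcongr
  have h1 : √|u| ≤ (1 + u ^ 2) ^ (1 / 4 : ℝ) := by
    have h2 : |u| ≤ (1 + u ^ 2) ^ (1 / 2 : ℝ) := by
      rw [← Real.sqrt_eq_rpow]
      exact Real.abs_le_sqrt (by linarith)
    rw [Real.sqrt_eq_rpow]
    refine (Real.rpow_le_rpow (abs_nonneg u) h2 (by norm_num)).trans_eq ?_
    rw [← Real.rpow_mul h0.le]; norm_num
  calc (1 + u ^ 2)⁻¹ * √|u| ≤ (1 + u ^ 2) ^ (-1 : ℝ) * (1 + u ^ 2) ^ (1 / 4 : ℝ) := by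
        rw [Real.rpow_neg_one]; gcongr
    _ = (1 + u ^ 2) ^ (-(3 / 2) / 2 : ℝ) := by
        rw [← Real.rpow_add h0]; norm_num

theorem Pker_mul_sqrt_eq {t : ℝ} (ht : 0 < t) (u : ℝ) :
    Pker t u * √|u| = (t⁻¹ * √t) * (Pker 1 (t⁻¹ * u) * √|t⁻¹ * u|) := by
  have h : √|u| = √t * √|t⁻¹ * u| := by
    rw [← Real.sqrt_mul ht.le, abs_mul, abs_of_pos (inv_pos.2 ht), mul_inv_cancel_left₀ ht.ne']
  rw [h, Pker_eq_scaled ht, Pker_eq_scaled one_pos, mul_inv]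
  simp only [inv_one, one_mul, mul_one]
  ring

theorem integrable_Pker_mul_sqrt {t : ℝ} (ht : 0 < t) : Integrable fun u => Pker t u * √|u| := by
  simp_rw [Pker_mul_sqrt_eq ht]
  exact (integrable_Pker_one_mul_sqrt.comp_mul_left' (inv_ne_zero ht.ne')).const_mul _

theorem integral_Pker_mul_sqrt {t : ℝ} (ht : 0 < t) :
    ∫ u, Pker t u * √|u| = √t * ∫ u, Pker 1 u * √|u| := by
  simp_rw [Pker_mul_sqrt_eq ht]
  rw [integral_const_mul, Measure.integral_comp_mul_left (fun x => Pker 1 x * √|x|), inv_inv,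
    abs_of_pos ht, smul_eq_mul]
  field_simp

end PoissonKernel

section Semigroup

open Complex in
theorem integral_cexp_neg_mul_Ioi {c : ℂ} (hc : 0 < c.re) :
    ∫ x : ℝ in Ioi 0, cexp (-c * x) = 1 / c := by
  rw [integral_exp_mul_complex_Ioi (by simpa using hc)]
  simp

open Complex in
theorem integrableOn_mul_cexp_neg_mul_Ioi {c : ℂ} (hc : 0 < c.re) :
    IntegrableOn (fun x : ℝ => (x : ℂ) * cexp (-c * x)) (Ioi 0) := by
  have h := integrableOn_rpow_mul_exp_neg_mul_rpow (p := 1) (s := 1) (b := c.re)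
    (by norm_num) one_pos hc
  refine Integrable.mono' h (by fun_prop) ?_
  filter_upwards [ae_restrict_mem measurableSet_Ioi] with x hx
  have hx' : 0 < x := hx
  simp [Complex.norm_exp, abs_of_pos hx']

open Complex in
theorem integral_mul_cexp_neg_mul_Ioi {c : ℂ} (hc : 0 < c.re) :
    ∫ x : ℝ in Ioi 0, (x : ℂ) * cexp (-c * x) = 1 / c ^ 2 := by
  have hc0 : c ≠ 0 := by rintro rfl; simp at hc
  have key := integral_Ioi_of_hasDerivAt_of_tendsto'
    (f := fun x : ℝ => -((x : ℂ) / c + 1 / c ^ 2) * cexp (-c * x))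
    (f' := fun x : ℝ => (x : ℂ) * cexp (-c * x)) (a := 0) (m := 0) ?_
    (integrableOn_mul_cexp_neg_mul_Ioi hc) ?_
  · rw [key]; simp
  · intro x _
    have h1 : HasDerivAt (fun x : ℝ => (x : ℂ)) 1 x := hasDerivAt_id x |>.ofReal_comp
    have h2 := (((h1.div_const c).add_const (1 / c ^ 2)).neg).mul ((h1.const_mul (-c)).cexp)
    convert! h2 using 1
    simp only [Pi.neg_apply]
    field_simp
    ring
  · rw [tendsto_zero_iff_norm_tendsto_zero]
    have e1 : Tendsto (fun x : ℝ => x ^ (1 : ℝ) * Real.exp (-c.re * x)) atTop (𝓝 0) :=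
      tendsto_rpow_mul_exp_neg_mul_atTop_nhds_zero 1 c.re hc
    have e0 : Tendsto (fun x : ℝ => x ^ (0 : ℝ) * Real.exp (-c.re * x)) atTop (𝓝 0) :=
      tendsto_rpow_mul_exp_neg_mul_atTop_nhds_zero 0 c.re hc
    have e2 := (e1.const_mul ‖c‖⁻¹).add (e0.const_mul (‖c‖ ^ 2)⁻¹)
    simp only [mul_zero, add_zero] at e2
    refine squeeze_zero' (.of_forall fun x => norm_nonneg _) ?_ e2
    filter_upwards [eventually_gt_atTop 0] with x hx
    rw [norm_mul, norm_neg, Complex.norm_exp]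
    have : (-c * (x : ℂ)).re = -c.re * x := by simp
    rw [this, Real.rpow_one, Real.rpow_zero, ← mul_assoc, ← mul_assoc, ← add_mul]
    gcongr
    refine (norm_add_le _ _).trans_eq ?_
    simp [abs_of_pos hx, div_eq_mul_inv, mul_comm]

/-- The multiplier `k(|v|) exp(-2πt|v|)`. -/
noncomputable def radialExp (k : ℝ → ℝ) (t v : ℝ) : ℂ :=
  (k |v| * Real.exp (-(2 * Real.pi * t * |v|)) : ℝ)

open Complex in
theorem radialExp_laplace {k : ℝ → ℝ} {m : ℂ → ℂ}
    (h_int : ∀ c : ℂ, 0 < c.re → IntegrableOn (fun x : ℝ => (k x : ℂ) * cexp (-c * x)) (Ioi 0))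
    (hval : ∀ c : ℂ, 0 < c.re → ∫ x : ℝ in Ioi 0, (k x : ℂ) * cexp (-c * x) = m c)
    {t : ℝ} (ht : 0 < t) (x : ℝ) :
    Integrable (radialExp k t) ∧
    𝓕⁻ (radialExp k t) x =
      m (2 * Real.pi * (t + x * I)) + m (2 * Real.pi * (t - x * I)) := by
  have hpos (y : ℝ) : 0 < (2 * Real.pi * (t + y * I) : ℂ).re := by
    have : (2 * Real.pi * (t + y * I) : ℂ).re = 2 * Real.pi * t := by simp
    rw [this]; positivity
  have hneg (y : ℝ) : 0 < (2 * Real.pi * (t - y * I) : ℂ).re := by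
    have := hpos (-y)
    rwa [ofReal_neg, neg_mul, ← sub_eq_add_neg] at this
  set F : ℝ → ℝ → ℂ := fun y v => cexp ((2 * Real.pi * (v * y) : ℝ) * I) * radialExp k t v with hF
  have hR (y : ℝ) : ∀ v ∈ Ioi (0 : ℝ),
      F y v = (k v : ℂ) * cexp (-(2 * Real.pi * (t - y * I)) * v) := by
    intro v hv
    simp only [hF, radialExp, abs_of_pos (mem_Ioi.1 hv), ofReal_mul, ofReal_exp]
    rw [mul_left_comm, ← Complex.exp_add]
    congr 2; push_cast; ring
  have hL (y : ℝ) : ∀ v ∈ Ioi (0 : ℝ),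
      F y (-v) = (k v : ℂ) * cexp (-(2 * Real.pi * (t + y * I)) * v) := by
    intro v hv
    simp only [hF, radialExp, abs_neg, abs_of_pos (mem_Ioi.1 hv), ofReal_mul, ofReal_exp]
    rw [mul_left_comm, ← Complex.exp_add]
    congr 2; push_cast; ring
  have iR (y : ℝ) : IntegrableOn (F y) (Ioi 0) :=
    (h_int _ (hneg y)).congr_fun (fun v hv => (hR y v hv).symm) measurableSet_Ioi
  have iL (y : ℝ) : IntegrableOn (F y) (Iic 0) := by
    have h : IntegrableOn (fun v => F y (-v)) (Ioi 0) :=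
      (h_int _ (hpos y)).congr_fun (fun v hv => (hL y v hv).symm) measurableSet_Ioi
    rw [integrableOn_Iic_iff_integrableOn_Iio]
    have h2 := h.comp_neg
    simpa using h2
  have vR : ∫ v in Ioi 0, F x v = m (2 * Real.pi * (t - x * I)) := by
    rw [setIntegral_congr_fun measurableSet_Ioi (hR x), hval _ (hneg x)]
  have vL : ∫ v in Iic 0, F x v = m (2 * Real.pi * (t + x * I)) := by
    have := integral_comp_neg_Ioi 0 (F x)
    rw [neg_zero] at this
    rw [← this, setIntegral_congr_fun measurableSet_Ioi (hL x), hval _ (hpos x)]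
  constructor
  · have h := (iL 0).union (iR 0)
    rw [Iic_union_Ioi, integrableOn_univ] at h
    refine h.congr (.of_forall fun v => ?_)
    simp [hF]
  · rw [Real.fourierInv_eq', ← vL, ← vR, intervalIntegral.integral_Iic_add_Ioi (iL x) (iR x)]
    refine integral_congr_ae (.of_forall fun v => ?_)
    simp [hF, mul_comm]

open Complex in
theorem radialExp_one {t : ℝ} (ht : 0 < t) :
    Integrable (radialExp (fun _ => 1) t) ∧
      𝓕⁻ (radialExp (fun _ => 1) t) = fun x => (Pker t x : ℂ) := by
  have key := fun x => radialExp_laplace (k := fun _ => 1) (m := fun c => 1 / c)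
    (fun c hc => by simpa using integrableOn_exp_mul_complex_Ioi (a := -c) (by simpa using hc) 0)
    (fun c hc => by simpa using integral_cexp_neg_mul_Ioi hc) ht x
  refine ⟨(key 0).1, funext fun x => ?_⟩
  rw [(key x).2]
  have h1 : (t + x * I : ℂ) ≠ 0 := fun h => ht.ne' (by simpa using congrArg re h)
  have h2 : (t - x * I : ℂ) ≠ 0 := fun h => ht.ne' (by simpa using congrArg re h)
  have h3 : ((t : ℂ) ^ 2 + x ^ 2) = (t + x * I) * (t - x * I) := by
    ring_nf; simp
  have h4 : (Real.pi : ℂ) ≠ 0 := ofReal_ne_zero.2 Real.pi_ne_zero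
  unfold Pker
  push_cast
  rw [h3]
  field_simp
  ring

open Complex in
theorem radialExp_id {t : ℝ} (ht : 0 < t) :
    Integrable (radialExp (fun v => -2 * Real.pi * v) t) ∧
      𝓕⁻ (radialExp (fun v => -2 * Real.pi * v) t) = fun x => (Qker t x : ℂ) := by
  have key := fun x => radialExp_laplace (k := fun v => -2 * Real.pi * v)
    (m := fun c => -2 * Real.pi * (1 / c ^ 2))
    (fun c hc => by
      have := (integrableOn_mul_cexp_neg_mul_Ioi hc).const_mul (-2 * Real.pi : ℂ)
      simpa [mul_assoc, IntegrableOn] using this)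
    (fun c hc => by
      rw [← integral_mul_cexp_neg_mul_Ioi hc, ← integral_const_mul]
      simp [mul_assoc]) ht x
  refine ⟨(key 0).1, funext fun x => ?_⟩
  rw [(key x).2]
  have h1 : (t + x * I : ℂ) ≠ 0 := fun h => ht.ne' (by simpa using congrArg re h)
  have h2 : (t - x * I : ℂ) ≠ 0 := fun h => ht.ne' (by simpa using congrArg re h)
  have h3 : ((t : ℂ) ^ 2 + x ^ 2) = (t + x * I) * (t - x * I) := by
    ring_nf; simp
  have h4 : (Real.pi : ℂ) ≠ 0 := ofReal_ne_zero.2 Real.pi_ne_zero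
  have h5 : (x : ℂ) ^ 2 - t ^ 2 = -((t + x * I) ^ 2 + (t - x * I) ^ 2) / 2 := by
    ring_nf; simp
  unfold Qker
  push_cast
  rw [h3, h5]
  field_simp
  ring

theorem continuous_radialExp {k : ℝ → ℝ} (hk : Continuous k) (t : ℝ) :
    Continuous (radialExp k t) := by
  unfold radialExp; fun_prop

theorem fourier_Pker {t : ℝ} (ht : 0 < t) :
    𝓕 (fun x => (Pker t x : ℂ)) = radialExp (fun _ => 1) t := by
  obtain ⟨hi, he⟩ := radialExp_one ht
  rw [← he]
  refine (continuous_radialExp continuous_const t).fourier_fourierInv_eq hi ?_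
  have h : Integrable (𝓕⁻ (radialExp (fun _ => 1) t)) := he ▸ (integrable_Pker ht).ofReal
  have h2 := h.comp_neg
  refine h2.congr (.of_forall fun x => ?_)
  simp [Real.fourierInv_eq_fourier_neg]

theorem fourier_Qker {t : ℝ} (ht : 0 < t) :
    𝓕 (fun x => (Qker t x : ℂ)) = radialExp (fun v => -2 * Real.pi * v) t := by
  obtain ⟨hi, he⟩ := radialExp_id ht
  rw [← he]
  refine (continuous_radialExp (by fun_prop) t).fourier_fourierInv_eq hi ?_
  have h : Integrable (𝓕⁻ (radialExp (fun v => -2 * Real.pi * v) t)) :=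
    he ▸ (integrable_Qker ht).ofReal
  have h2 := h.comp_neg
  refine h2.congr (.of_forall fun x => ?_)
  simp [Real.fourierInv_eq_fourier_neg]

open scoped Convolution in
/-- The semigroup identity `P_t * Q_t = Q_{2t}`. -/
theorem integral_Pker_mul_Qker {t : ℝ} (ht : 0 < t) (x : ℝ) :
    ∫ u, Pker t u * Qker t (x - u) = Qker (2 * t) x := by
  set P : ℝ → ℂ := fun x => (Pker t x : ℂ) with hP
  set Q : ℝ → ℂ := fun x => (Qker t x : ℂ) with hQ
  have iP : Integrable P := (integrable_Pker ht).ofReal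
  have iQ : Integrable Q := (integrable_Qker ht).ofReal
  have cP : Continuous P := Complex.continuous_ofReal.comp (continuous_Pker ht)
  have hF : 𝓕 (P ⋆[ContinuousLinearMap.mul ℂ ℂ] Q) =
      radialExp (fun v => -2 * Real.pi * v) (2 * t) := by
    ext ξ
    rw [Real.fourier_mul_convolution_eq iP iQ, fourier_Pker ht, fourier_Qker ht]
    simp only [radialExp]
    rw [← Complex.ofReal_mul]
    congr 1
    rw [one_mul, mul_left_comm, ← Real.exp_add]
    congr 2; ring
  have hb : BddAbove (range fun x => ‖P x‖) := by
    refine ⟨(Real.pi * t)⁻¹, ?_⟩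
    rintro _ ⟨u, rfl⟩
    simpa [hP] using Pker_le ht u
  have hc : Continuous (P ⋆[ContinuousLinearMap.mul ℂ ℂ] Q) :=
    hb.continuous_convolution_left_of_integrable _ cP iQ
  obtain ⟨i2, e2⟩ := radialExp_id (t := 2 * t) (by positivity)
  have h := hc.fourierInv_fourier_eq (iP.integrable_convolution _ iQ) (hF ▸ i2)
  rw [hF, e2] at h
  have hx := congrFun h x
  simp only [convolution_def, ContinuousLinearMap.mul_apply', hP, hQ, ← Complex.ofReal_mul] at hx
  rw [integral_complex_ofReal] at hx
  exact (Complex.ofReal_injective hx).symm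

end Semigroup

open ENNReal

section Minkowski

variable {Y : Type*} [NormedAddCommGroup Y]

theorem lintegral_rpow_lintegral_le {α β : Type*} [MeasurableSpace α] [MeasurableSpace β]
    {ν : Measure α} {μ : Measure β} [SFinite ν] [SFinite μ] {p : ℝ} (hp : 1 ≤ p)
    {G : α → β → ℝ≥0∞} (hG : Measurable (Function.uncurry G)) {K : ℝ≥0∞}
    (hK : ∀ᵐ u ∂ν, ∫⁻ h, G u h ^ p ∂μ ≤ K ^ p) :
    ∫⁻ h, (∫⁻ u, G u h ∂ν) ^ p ∂μ ≤ (ν univ * K) ^ p := by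
  have hp0 : 0 < p := one_pos.trans_le hp
  have jensen (h : β) : (∫⁻ u, G u h ∂ν) ^ p ≤ (∫⁻ u, G u h ^ p ∂ν) * ν univ ^ (p - 1) := by
    have hm : Measurable fun u => G u h := hG.comp (measurable_id.prodMk measurable_const)
    have := lintegral_mul_norm_pow_le (μ := ν) (f := fun u => G u h ^ p) (g := fun _ => 1)
      (hm.pow_const p).aemeasurable aemeasurable_const (p := 1 / p) (q := 1 - 1 / p)
      (by positivity) (sub_nonneg.2 (by rw [div_le_one hp0]; exact hp)) (by ring)
    simp only [← ENNReal.rpow_mul, mul_one_div_cancel hp0.ne', ENNReal.rpow_one, ENNReal.one_rpow,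
      mul_one, lintegral_const, one_mul] at this
    refine (ENNReal.rpow_le_rpow this hp0.le).trans_eq ?_
    rw [ENNReal.mul_rpow_of_nonneg _ _ hp0.le, ← ENNReal.rpow_mul, ← ENNReal.rpow_mul,
      one_div_mul_cancel hp0.ne', ENNReal.rpow_one, sub_mul, one_mul, one_div_mul_cancel hp0.ne']
  have hGp : Measurable (Function.uncurry fun u h => G u h ^ p) := hG.pow_const p
  calc ∫⁻ h, (∫⁻ u, G u h ∂ν) ^ p ∂μ
      ≤ ∫⁻ h, (∫⁻ u, G u h ^ p ∂ν) * ν univ ^ (p - 1) ∂μ := lintegral_mono jensen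
    _ = (∫⁻ h, ∫⁻ u, G u h ^ p ∂ν ∂μ) * ν univ ^ (p - 1) :=
        lintegral_mul_const _ (hGp.lintegral_prod_left')
    _ = (∫⁻ u, ∫⁻ h, G u h ^ p ∂μ ∂ν) * ν univ ^ (p - 1) := by
        rw [lintegral_lintegral_swap hGp.aemeasurable]
    _ ≤ (∫⁻ _, K ^ p ∂ν) * ν univ ^ (p - 1) := by
        gcongr ?_ * _
        exact lintegral_mono_ae hK
    _ = (ν univ * K) ^ p := by
        rw [lintegral_const, mul_assoc, ENNReal.mul_rpow_of_nonneg _ _ hp0.le, mul_comm]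
        congr 1
        conv_lhs => enter [1]; rw [← ENNReal.rpow_one (ν univ)]
        rw [← ENNReal.rpow_add_of_nonneg _ _ zero_le_one (by linarith)]
        congr 1; ring

/-- Minkowski's integral inequality, for a family with uniformly bounded `L_p` norms. -/
theorem eLpNorm_le_of_enorm_le_lintegral {α β Z : Type*} [MeasurableSpace α] [MeasurableSpace β]
    [NormedAddCommGroup Z]
    {ν : Measure α} {μ : Measure β} [SFinite ν] [SFinite μ] {p : ℝ} (hp : 1 ≤ p)
    {G : α → β → Y} (hG : StronglyMeasurable (Function.uncurry G)) {K : ℝ≥0∞}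
    (hK : ∀ᵐ u ∂ν, eLpNorm (G u) (.ofReal p) μ ≤ K) {F : β → Z}
    (hF : ∀ h, ‖F h‖ₑ ≤ ∫⁻ u, ‖G u h‖ₑ ∂ν) :
    eLpNorm F (.ofReal p) μ ≤ ν univ * K := by
  have hp0 : 0 < p := one_pos.trans_le hp
  have h0 : ENNReal.ofReal p ≠ 0 := (ENNReal.ofReal_pos.2 hp0).ne'
  simp only [eLpNorm_eq_lintegral_rpow_enorm_toReal h0 ofReal_ne_top, toReal_ofReal hp0.le] at hK ⊢
  rw [one_div, ENNReal.rpow_inv_le_iff hp0]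
  refine le_trans (lintegral_mono fun h => ENNReal.rpow_le_rpow (hF h) hp0.le)
    (lintegral_rpow_lintegral_le hp hG.enorm ?_)
  filter_upwards [hK] with u hu
  rwa [one_div, ENNReal.rpow_inv_le_iff hp0] at hu

theorem eLpNorm_le_eLpNorm_add_eLpNorm_sub {α : Type*} [MeasurableSpace α] {μ : Measure α}
    {p : ℝ≥0∞} {F G : α → Y} (hF : AEStronglyMeasurable F μ) (hG : AEStronglyMeasurable G μ)
    (hp : 1 ≤ p) : eLpNorm F p μ ≤ eLpNorm G p μ + eLpNorm (G - F) p μ := by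
  have h := eLpNorm_sub_le hG (hG.sub hF) hp
  have e : G - (G - F) = F := funext fun _ => sub_sub_cancel _ _
  rwa [e] at h

end Minkowski

section Conv

variable {X : Type*} [NormedAddCommGroup X] [NormedSpace ℝ X]

theorem measurable_vmul : Measurable fun x : ℝ × HR => vmul x.1 x.2 := by
  unfold vmul; fun_prop

theorem measurePreserving_shear (a b : ℝ) {c : ℝ → ℝ} (hc : Measurable c) :
    MeasurePreserving (fun h : HR => ((h.1 + a, h.2.1 + b, h.2.2 + c h.1) : HR)) := by
  have h (d : ℝ) : MeasurePreserving (fun w : ℝ × ℝ => (w.1 + b, w.2 + d))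
      (volume.prod volume) (volume.prod volume) :=
    (measurePreserving_add_right volume b).prod (measurePreserving_add_right volume d)
  exact (measurePreserving_add_right volume a).skew_product
    (g := fun (x : ℝ) (w : ℝ × ℝ) => (w.1 + b, w.2 + c x)) (by fun_prop)
    (.of_forall fun x => (h (c x)).map_eq)

theorem measurePreserving_vmul (t : ℝ) : MeasurePreserving (vmul t) := by
  have h := measurePreserving_shear 0 0 (measurable_const (a := t))
  simp only [add_zero] at h
  exact h

theorem conv_eq (ψ : ℝ → ℝ) (g : HR → X) (h : HR) :
    conv ψ g h = ∫ u, ψ u • g (vmul (-u) h) := by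
  simp only [conv, vmul, sub_eq_add_neg]

theorem stronglyMeasurable_conv {ψ : ℝ → ℝ} (hψ : Measurable ψ) {g : HR → X}
    (hg : StronglyMeasurable g) : StronglyMeasurable (conv ψ g) := by
  have h : StronglyMeasurable fun x : HR × ℝ => ψ x.2 • g (vmul (-x.2) x.1) :=
    (hψ.comp measurable_snd).stronglyMeasurable.smul
      (hg.comp_measurable (measurable_vmul.comp (measurable_snd.neg.prodMk measurable_fst)))
  convert! h.integral_prod_right' (ν := volume) using 1

theorem stronglyMeasurable_conv_Qker {g : HR → X} (hg : StronglyMeasurable g) :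
    StronglyMeasurable fun x : ℝ × HR => conv (Qker x.1) g x.2 := by
  have h : StronglyMeasurable fun x : (ℝ × HR) × ℝ => Qker x.1.1 x.2 • g (vmul (-x.2) x.1.2) :=
    (measurable_Qker.comp
      (measurable_fst.fst.prodMk measurable_snd)).stronglyMeasurable.smul
      (hg.comp_measurable (measurable_vmul.comp (measurable_snd.neg.prodMk measurable_fst.snd)))
  convert! h.integral_prod_right' (ν := volume) using 1

theorem eLpNorm_conv_le {p : ℝ} (hp : 1 ≤ p) {ψ : ℝ → ℝ} (hψ : Measurable ψ) {g : HR → X}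
    (hg : StronglyMeasurable g) :
    eLpNorm (conv ψ g) (.ofReal p) ≤ (∫⁻ u, ‖ψ u‖ₑ) * eLpNorm g (.ofReal p) := by
  have hν : (∫⁻ u, ‖ψ u‖ₑ) = (volume.withDensity fun u => ‖ψ u‖ₑ) univ := by simp
  rw [hν]
  refine eLpNorm_le_of_enorm_le_lintegral hp (G := fun u h => g (vmul (-u) h))
    (hg.comp_measurable (measurable_vmul.comp (measurable_fst.neg.prodMk measurable_snd)))
    (.of_forall fun u => ?_) fun h => ?_
  · exact (eLpNorm_comp_measurePreserving hg.aestronglyMeasurable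
      (measurePreserving_vmul (-u))).le
  · have hm : Measurable fun u => ‖g (vmul (-u) h)‖ₑ :=
      (hg.comp_measurable
        (measurable_vmul.comp (measurable_id.neg.prodMk measurable_const))).enorm
    rw [lintegral_withDensity_eq_lintegral_mul _ hψ.enorm hm, conv_eq]
    refine (enorm_integral_le_lintegral_enorm _).trans_eq (lintegral_congr fun u => ?_)
    simp [enorm_smul]

/-- A bounded strongly measurable function paired with an integrable kernel. -/
theorem integrable_smul_vmul {ψ : ℝ → ℝ} (hψ : Integrable ψ) {g : HR → X}
    (hg : StronglyMeasurable g) {M : ℝ} (hM : ∀ h, ‖g h‖ ≤ M) (h : HR) :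
    Integrable fun u => ψ u • g (vmul (-u) h) :=
  hψ.smul_bdd M (hg.comp_measurable
    (measurable_vmul.comp (measurable_id.neg.prodMk measurable_const))).aestronglyMeasurable
    (.of_forall fun _ => hM _)

theorem norm_conv_le {ψ : ℝ → ℝ} (hψ : Integrable ψ) {g : HR → X}
    {M : ℝ} (hM : ∀ h, ‖g h‖ ≤ M) (h : HR) : ‖conv ψ g h‖ ≤ (∫ u, ‖ψ u‖) * M := by
  rw [conv_eq, ← integral_mul_const]
  refine norm_integral_le_of_norm_le (hψ.norm.mul_const M) (.of_forall fun u => ?_)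
  rw [norm_smul]; gcongr; exact hM _

/-- The semigroup identity `Q_{2t} * g = P_t * (Q_t * g)`. -/
theorem conv_Qker_two_mul [CompleteSpace X] {t : ℝ} (ht : 0 < t) {g : HR → X}
    (hg : StronglyMeasurable g) {M : ℝ} (hM : ∀ h, ‖g h‖ ≤ M) (h : HR) :
    conv (Qker (2 * t)) g h = conv (Pker t) (conv (Qker t) g) h := by
  have e1 (u : ℝ) : Pker t u • conv (Qker t) g (vmul (-u) h) =
      ∫ w, (Pker t u * Qker t (w - u)) • g (vmul (-w) h) := by
    rw [conv_eq, ← integral_smul,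
      ← integral_sub_right_eq_self (fun v => Pker t u • Qker t v • g (vmul (-v) (vmul (-u) h))) u]
    refine integral_congr_ae (.of_forall fun w => ?_)
    simp only [smul_smul, vmul]
    congr 4
    ring
  have hprod : Integrable (Function.uncurry fun u w : ℝ => Pker t u * Qker t (w - u))
      (volume.prod volume) := by
    have h := ((integrable_Pker ht).convolution_integrand (ContinuousLinearMap.mul ℝ ℝ)
      (integrable_Qker ht)).swap
    exact h.congr (.of_forall fun x => rfl)
  have h_int : Integrable (Function.uncurry fun u w : ℝ =>
      (Pker t u * Qker t (w - u)) • g (vmul (-w) h)) (volume.prod volume) :=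
    hprod.smul_bdd M (hg.comp_measurable
      (measurable_vmul.comp (measurable_snd.neg.prodMk measurable_const))).aestronglyMeasurable
      (.of_forall fun _ => hM _)
  rw [conv_eq, conv_eq]
  simp_rw [e1]
  rw [integral_integral_swap h_int]
  refine integral_congr_ae (.of_forall fun w => ?_)
  simp only
  rw [integral_smul_const, integral_Pker_mul_Qker ht]

theorem lintegral_enorm_Qker_le {t : ℝ} (ht : 0 < t) :
    ∫⁻ u, ‖Qker t u‖ₑ ≤ ENNReal.ofReal t⁻¹ := by
  rw [← ofReal_integral_norm_eq_lintegral_enorm (integrable_Qker ht)]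
  exact ENNReal.ofReal_le_ofReal (integral_abs_Qker_le ht)

/-- If a flow `T` commutes with the center and `df` is the derivative of `f` along `T`, then
the increments of `ψ * f` along `T` are controlled by `ψ * df`. -/
theorem eLpNorm_increment_le {p : ℝ} (hp : 1 ≤ p) {T : ℝ → HR → HR}
    (hT : Measurable (Function.uncurry T)) (hTp : ∀ s, MeasurePreserving (T s))
    (hTc : ∀ s u h, T s (vmul u h) = vmul u (T s h)) {f df : HR → X}
    (hf : StronglyMeasurable f) {M : ℝ} (hM : ∀ h, ‖f h‖ ≤ M)
    (hdf : StronglyMeasurable df) {M' : ℝ} (hM' : ∀ h, ‖df h‖ ≤ M')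
    (hftc : ∀ s h, f (T s h) - f h = ∫ σ in (0 : ℝ)..s, df (T σ h))
    {ψ : ℝ → ℝ} (hψ : Integrable ψ) (hψm : Measurable ψ) {s : ℝ} (hs : 0 ≤ s) :
    eLpNorm (fun h => conv ψ f (T s h) - conv ψ f h) (.ofReal p) ≤
      ENNReal.ofReal s * eLpNorm (conv ψ df) (.ofReal p) := by
  have key (h : HR) : conv ψ f (T s h) - conv ψ f h = ∫ σ in (0 : ℝ)..s, conv ψ df (T σ h) := by
    have h_int : Integrable (Function.uncurry fun σ u : ℝ => ψ u • df (vmul (-u) (T σ h)))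
        ((volume.restrict (uIoc 0 s)).prod volume) := by
      have : IsFiniteMeasure (volume.restrict (uIoc 0 s)) :=
        ⟨by simp [uIoc]⟩
      have h1 : Integrable (fun x : ℝ × ℝ => (1 : ℝ) * ψ x.2)
          ((volume.restrict (uIoc 0 s)).prod volume) :=
        Integrable.mul_prod (integrable_const (1 : ℝ)) hψ
      simp only [one_mul] at h1
      exact h1.smul_bdd M' (hdf.comp_measurable
        (measurable_vmul.comp (measurable_snd.neg.prodMk
          (hT.comp (measurable_fst.prodMk measurable_const))))).aestronglyMeasurable
        (.of_forall fun _ => hM' _)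
    simp_rw [conv_eq ψ df]
    rw [intervalIntegral_integral_swap h_int, conv_eq, conv_eq,
      ← integral_sub (integrable_smul_vmul hψ hf hM _) (integrable_smul_vmul hψ hf hM _)]
    refine integral_congr_ae (.of_forall fun u => ?_)
    simp only
    rw [intervalIntegral.integral_smul, ← smul_sub, ← hTc, hftc]
    simp_rw [hTc]
  have hν : ENNReal.ofReal s = (volume.restrict (Ioc 0 s)) univ := by simp
  have hc := stronglyMeasurable_conv hψm hdf
  rw [hν]
  refine eLpNorm_le_of_enorm_le_lintegral hp (G := fun σ h => conv ψ df (T σ h))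
    (hc.comp_measurable hT)
    (.of_forall fun σ => ?_) fun h => ?_
  · exact (eLpNorm_comp_measurePreserving hc.aestronglyMeasurable (hTp σ)).le
  · rw [key, intervalIntegral.integral_of_le hs]
    exact enorm_integral_le_lintegral_enorm _

end Conv

section Flows

variable {X : Type*} [NormedAddCommGroup X] [NormedSpace ℝ X]

/-- Right translation `h ↦ h·a^s`. -/
def flowA (s : ℝ) (h : HR) : HR := (h.1 + s, h.2.1, h.2.2)

/-- Right translation `h ↦ h·b^s`. -/
def flowB (s : ℝ) (h : HR) : HR := (h.1, h.2.1 + s, h.2.2 + h.1 * s)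

theorem measurable_flowA : Measurable (Function.uncurry flowA) := by
  unfold flowA Function.uncurry; fun_prop

theorem measurable_flowB : Measurable (Function.uncurry flowB) := by
  unfold flowB Function.uncurry; fun_prop

theorem measurePreserving_flowA (s : ℝ) : MeasurePreserving (flowA s) := by
  have h := measurePreserving_shear s 0 (measurable_const (a := (0 : ℝ)))
  simp only [add_zero] at h
  exact h

theorem measurePreserving_flowB (s : ℝ) : MeasurePreserving (flowB s) := by
  have h := measurePreserving_shear 0 s (measurable_id.mul_const s)
  simp only [add_zero] at h
  exact h

theorem flowA_vmul (s u : ℝ) (h : HR) : flowA s (vmul u h) = vmul u (flowA s h) := rfl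

theorem flowB_vmul (s u : ℝ) (h : HR) : flowB s (vmul u h) = vmul u (flowB s h) := by
  simp only [flowB, vmul, Prod.mk.injEq, true_and]; ring

theorem flowA_flowA_neg (s : ℝ) (h : HR) : flowA s (flowA (-s) h) = h := by
  simp [flowA]

theorem flowB_flowB_neg (s : ℝ) (h : HR) : flowB s (flowB (-s) h) = h := by
  simp [flowB]

/-- The central element `c^{s²}` is the commutator of `a^s` and `b^s`. -/
theorem flow_commutator (s : ℝ) (h : HR) :
    flowB (-s) (flowA (-s) (flowB s (flowA s h))) = vmul (s ^ 2) h := by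
  ext <;> simp only [flowA, flowB, vmul] <;> ring

/-- Increments along the center are controlled by increments along the horizontal flows. -/
theorem eLpNorm_sub_vmul_sq_le {Y : Type*} [NormedAddCommGroup Y] {p : ℝ} (hp : 1 ≤ p)
    {g : HR → Y} (hg : StronglyMeasurable g) {s : ℝ} :
    eLpNorm (fun h => g (vmul (s ^ 2) h) - g h) (.ofReal p) ≤
      2 * (eLpNorm (fun h => g (flowA s h) - g h) (.ofReal p) +
        eLpNorm (fun h => g (flowB s h) - g h) (.ofReal p)) := by
  set dA : HR → Y := fun h => g (flowA s h) - g h with hdA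
  set dB : HR → Y := fun h => g (flowB s h) - g h with hdB
  have mA : StronglyMeasurable dA :=
    (hg.comp_measurable (measurePreserving_flowA s).measurable).sub hg
  have mB : StronglyMeasurable dB :=
    (hg.comp_measurable (measurePreserving_flowB s).measurable).sub hg
  have p1 := measurePreserving_flowA s
  have p3 := (measurePreserving_flowA (-s)).comp ((measurePreserving_flowB s).comp p1)
  have p4 := (measurePreserving_flowB (-s)).comp p3
  have hp1 : 1 ≤ ENNReal.ofReal p := by simpa using hp
  have hdecomp : (fun h => g (vmul (s ^ 2) h) - g h) =
      dA + dB ∘ flowA s - dA ∘ (flowA (-s) ∘ flowB s ∘ flowA s) -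
        dB ∘ (flowB (-s) ∘ flowA (-s) ∘ flowB s ∘ flowA s) := by
    ext h
    simp only [Pi.sub_apply, Pi.add_apply, Function.comp_apply, hdA, hdB, flowA_flowA_neg,
      flowB_flowB_neg]
    rw [flow_commutator]
    abel
  have m1 := mA.aestronglyMeasurable (μ := volume)
  have m2 := (mB.comp_measurable p1.measurable).aestronglyMeasurable (μ := volume)
  have m3 := (mA.comp_measurable p3.measurable).aestronglyMeasurable (μ := volume)
  have m4 := (mB.comp_measurable p4.measurable).aestronglyMeasurable (μ := volume)
  rw [hdecomp]
  refine (eLpNorm_sub_le ((m1.add m2).sub m3) m4 hp1).trans ?_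
  refine (add_le_add_left ((eLpNorm_sub_le (m1.add m2) m3 hp1).trans
    (add_le_add_left (eLpNorm_add_le m1 m2 hp1) _)) _).trans_eq ?_
  rw [eLpNorm_comp_measurePreserving mB.aestronglyMeasurable p1,
    eLpNorm_comp_measurePreserving mA.aestronglyMeasurable p3,
    eLpNorm_comp_measurePreserving mB.aestronglyMeasurable p4]
  ring

theorem continuous_da {f : HR → X} (hf : ContDiff ℝ (⊤ : ℕ∞) f) : Continuous (da f) :=
  (hf.continuous_fderiv (by simp)).clm_apply continuous_const

theorem continuous_db {f : HR → X} (hf : ContDiff ℝ (⊤ : ℕ∞) f) : Continuous (db f) :=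
  ((hf.continuous_fderiv (by simp)).clm_apply continuous_const).add
    (continuous_fst.smul ((hf.continuous_fderiv (by simp)).clm_apply continuous_const))

theorem hasCompactSupport_da {f : HR → X} (hf : HasCompactSupport f) :
    HasCompactSupport (da f) :=
  hf.fderiv_apply ℝ _

theorem hasCompactSupport_db {f : HR → X} (hf : HasCompactSupport f) :
    HasCompactSupport (db f) :=
  (hf.fderiv_apply ℝ _).add ((hf.fderiv_apply ℝ _).smul_left)

variable [CompleteSpace X]

theorem flowA_ftc {f : HR → X} (hf : ContDiff ℝ (⊤ : ℕ∞) f) (s : ℝ) (h : HR) :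
    f (flowA s h) - f h = ∫ σ in (0 : ℝ)..s, da f (flowA σ h) := by
  have hd (σ : ℝ) : HasDerivAt (fun σ => f (flowA σ h)) (da f (flowA σ h)) σ := by
    have h1 : HasDerivAt (fun σ => flowA σ h) ((1, 0, 0) : HR) σ :=
      ((hasDerivAt_id σ).const_add h.1).prodMk
        ((hasDerivAt_const σ h.2.1).prodMk (hasDerivAt_const σ h.2.2))
    exact ((hf.differentiable (by simp)) _).hasFDerivAt.comp_hasDerivAt σ h1
  rw [intervalIntegral.integral_eq_sub_of_hasDerivAt (fun σ _ => hd σ)]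
  · simp [flowA]
  · refine ((continuous_da hf).comp ?_).intervalIntegrable _ _
    unfold flowA; fun_prop

theorem flowB_ftc {f : HR → X} (hf : ContDiff ℝ (⊤ : ℕ∞) f) (s : ℝ) (h : HR) :
    f (flowB s h) - f h = ∫ σ in (0 : ℝ)..s, db f (flowB σ h) := by
  have hd (σ : ℝ) : HasDerivAt (fun σ => f (flowB σ h)) (db f (flowB σ h)) σ := by
    have h1 : HasDerivAt (fun σ => flowB σ h) ((0, 1, h.1) : HR) σ := by
      refine (hasDerivAt_const σ h.1).prodMk
        (((hasDerivAt_id σ).const_add h.2.1).prodMk ?_)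
      simpa using ((hasDerivAt_id σ).const_mul h.1).const_add h.2.2
    have h2 := ((hf.differentiable (by simp)) (flowB σ h)).hasFDerivAt.comp_hasDerivAt σ h1
    have h3 : ((0, 1, h.1) : HR) = (0, 1, 0) + h.1 • (0, 0, 1) := by simp
    rw [h3, map_add, map_smul] at h2
    exact h2
  rw [intervalIntegral.integral_eq_sub_of_hasDerivAt (fun σ _ => hd σ)]
  · simp [flowB]
  · refine ((continuous_db hf).comp ?_).intervalIntegrable _ _
    unfold flowB; fun_prop

theorem eLpNorm_conv_sub_vmul_le {p : ℝ} (hp : 1 ≤ p) {f : HR → X}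
    (hf : ContDiff ℝ (⊤ : ℕ∞) f) (hfc : HasCompactSupport f) {ψ : ℝ → ℝ}
    (hψ : Integrable ψ) (hψm : Measurable ψ) (u : ℝ) :
    eLpNorm (fun h => conv ψ f (vmul u h) - conv ψ f h) (.ofReal p) ≤
      ENNReal.ofReal √|u| * (2 * (eLpNorm (conv ψ (da f)) (.ofReal p) +
        eLpNorm (conv ψ (db f)) (.ofReal p))) := by
  obtain ⟨M, hM⟩ := hfc.exists_bound_of_continuous hf.continuous
  obtain ⟨Ma, hMa⟩ := (hasCompactSupport_da hfc).exists_bound_of_continuous (continuous_da hf)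
  obtain ⟨Mb, hMb⟩ := (hasCompactSupport_db hfc).exists_bound_of_continuous (continuous_db hf)
  have hg := stronglyMeasurable_conv hψm hf.continuous.stronglyMeasurable
  have main (s : ℝ) (hs : 0 ≤ s) :
      eLpNorm (fun h => conv ψ f (vmul (s ^ 2) h) - conv ψ f h) (.ofReal p) ≤
      ENNReal.ofReal s * (2 * (eLpNorm (conv ψ (da f)) (.ofReal p) +
        eLpNorm (conv ψ (db f)) (.ofReal p))) := by
    have eA := eLpNorm_increment_le hp measurable_flowA measurePreserving_flowA flowA_vmul
      hf.continuous.stronglyMeasurable hM (continuous_da hf).stronglyMeasurable hMa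
      (flowA_ftc hf) hψ hψm hs
    have eB := eLpNorm_increment_le hp measurable_flowB measurePreserving_flowB flowB_vmul
      hf.continuous.stronglyMeasurable hM (continuous_db hf).stronglyMeasurable hMb
      (flowB_ftc hf) hψ hψm hs
    calc _ ≤ _ := eLpNorm_sub_vmul_sq_le hp hg
      _ ≤ _ := mul_le_mul_right (add_le_add eA eB) 2
      _ = _ := by ring
  have hsq := main √|u| (Real.sqrt_nonneg _)
  rw [Real.sq_sqrt (abs_nonneg u)] at hsq
  refine le_trans ?_ hsq
  rcases le_total 0 u with hu | hu
  · rw [abs_of_nonneg hu]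
  · rw [abs_of_nonpos hu]
    have hm : StronglyMeasurable fun h => conv ψ f (vmul (-u) h) - conv ψ f h :=
      (hg.comp_measurable (measurePreserving_vmul (-u)).measurable).sub hg
    rw [← eLpNorm_comp_measurePreserving hm.aestronglyMeasurable (measurePreserving_vmul u),
      ← eLpNorm_neg]
    refine (congrArg (fun F => eLpNorm F (.ofReal p) volume) (funext fun h => ?_)).le
    simp [vmul]

/-- A `1/2`-Hölder bound on the central increments of `g` controls `P_t * g - g`. -/
theorem eLpNorm_conv_Pker_sub_le {p : ℝ} (hp : 1 ≤ p) {g : HR → X} (hg : StronglyMeasurable g)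
    {M : ℝ} (hM : ∀ h, ‖g h‖ ≤ M) {L : ℝ≥0∞}
    (hL : ∀ u, eLpNorm (fun h => g (vmul u h) - g h) (.ofReal p) ≤ ENNReal.ofReal √|u| * L)
    {t : ℝ} (ht : 0 < t) :
    eLpNorm (conv (Pker t) g - g) (.ofReal p) ≤
      ENNReal.ofReal (√t * ∫ u, Pker 1 u * √|u|) * L := by
  have hw0 (u : ℝ) : 0 ≤ Pker t u * √|u| := mul_nonneg (Pker_nonneg ht u) (Real.sqrt_nonneg _)
  have hwm : Measurable fun u => ENNReal.ofReal (Pker t u * √|u|) :=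
    ENNReal.measurable_ofReal.comp ((continuous_Pker ht).measurable.mul (by fun_prop))
  have hν : ENNReal.ofReal (√t * ∫ u, Pker 1 u * √|u|) =
      (volume.withDensity fun u => ENNReal.ofReal (Pker t u * √|u|)) univ := by
    rw [← integral_Pker_mul_sqrt ht, ofReal_integral_eq_lintegral_ofReal
      (integrable_Pker_mul_sqrt ht) (.of_forall hw0)]
    simp
  have hG : StronglyMeasurable (Function.uncurry fun (u : ℝ) (h : HR) =>
      (√|u|)⁻¹ • (g (vmul (-u) h) - g h)) :=
    (by fun_prop : Measurable fun x : ℝ × HR => (√|x.1|)⁻¹).stronglyMeasurable.smul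
      ((hg.comp_measurable (measurable_vmul.comp (measurable_fst.neg.prodMk measurable_snd))).sub
        (hg.comp_measurable measurable_snd))
  rw [hν]
  refine eLpNorm_le_of_enorm_le_lintegral hp hG (.of_forall fun u => ?_) fun h => ?_
  · have hc := eLpNorm_const_smul (𝕜 := ℝ) (√|u|)⁻¹ (fun h => g (vmul (-u) h) - g h)
      (.ofReal p) (volume : Measure HR)
    refine (le_of_eq hc).trans ((mul_le_mul_right (hL (-u)) _).trans ?_)
    rw [← mul_assoc]
    refine mul_le_of_le_one_left zero_le ?_
    rw [abs_neg, Real.enorm_of_nonneg (by positivity), ← ENNReal.ofReal_mul (by positivity)]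
    exact ENNReal.ofReal_le_one.2 inv_mul_le_one
  · have hm : Measurable fun u => ‖(√|u|)⁻¹ • (g (vmul (-u) h) - g h)‖ₑ :=
      (hG.comp_measurable (measurable_id.prodMk measurable_const)).enorm
    rw [lintegral_withDensity_eq_lintegral_mul _ hwm hm]
    have e1 : (conv (Pker t) g - g) h = ∫ u, Pker t u • (g (vmul (-u) h) - g h) := by
      simp_rw [smul_sub]
      rw [integral_sub (integrable_smul_vmul (integrable_Pker ht) hg hM h)
        ((integrable_Pker ht).smul_const _), integral_smul_const, integral_Pker ht, one_smul,
        Pi.sub_apply, conv_eq]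
    rw [e1]
    refine (enorm_integral_le_lintegral_enorm _).trans_eq (lintegral_congr fun u => ?_)
    rw [Pi.mul_apply, ← Real.enorm_of_nonneg (hw0 u), ← enorm_smul, smul_smul, mul_assoc]
    rcases eq_or_ne u 0 with rfl | hu
    · simp [vmul]
    · rw [mul_inv_cancel₀ (by positivity), mul_one]

/-- The Poisson semigroup identity turns the increment bound into a bound on the difference of
consecutive dyadic scales. -/
theorem eLpNorm_conv_Qker_le {p : ℝ} (hp : 1 ≤ p) {f : HR → X}
    (hf : ContDiff ℝ (⊤ : ℕ∞) f) (hfc : HasCompactSupport f) {t : ℝ} (ht : 0 < t) :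
    eLpNorm (conv (Qker t) f) (.ofReal p) ≤ eLpNorm (conv (Qker (2 * t)) f) (.ofReal p) +
      ENNReal.ofReal (√t * ∫ u, Pker 1 u * √|u|) *
        (2 * (eLpNorm (conv (Qker t) (da f)) (.ofReal p) +
          eLpNorm (conv (Qker t) (db f)) (.ofReal p))) := by
  obtain ⟨M, hM⟩ := hfc.exists_bound_of_continuous hf.continuous
  have hQm : Measurable (Qker t) := (continuous_Qker ht).measurable
  have hg := stronglyMeasurable_conv hQm hf.continuous.stronglyMeasurable
  have hg2 := stronglyMeasurable_conv (continuous_Pker ht).measurable hg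
  have hdiff := eLpNorm_conv_Pker_sub_le hp hg (norm_conv_le (integrable_Qker ht) hM)
    (eLpNorm_conv_sub_vmul_le hp hf hfc (integrable_Qker ht) hQm) ht
  have hp1 : 1 ≤ ENNReal.ofReal p := by simpa using hp
  have h2 : conv (Qker (2 * t)) f = conv (Pker t) (conv (Qker t) f) :=
    funext fun h => conv_Qker_two_mul ht hf.continuous.stronglyMeasurable hM h
  rw [h2]
  exact (eLpNorm_le_eLpNorm_add_eLpNorm_sub hg.aestronglyMeasurable hg2.aestronglyMeasurable
    hp1).trans (add_le_add_right hdiff _)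

end Flows

section Dyadic

theorem setLIntegral_Ioi_comp_two_mul {G : ℝ → ℝ≥0∞} (hG : Measurable G) (ε : ℝ) :
    ∫⁻ t in Ioi ε, G (2 * t) = ENNReal.ofReal 2⁻¹ * ∫⁻ t in Ioi (2 * ε), G t := by
  have hpre : (fun t : ℝ => 2 * t) ⁻¹' Ioi (2 * ε) = Ioi ε := by ext t; simp
  have hm : Measurable fun t : ℝ => 2 * t := by fun_prop
  rw [← hpre, ← setLIntegral_map measurableSet_Ioi hG hm, Real.map_volume_mul_left two_ne_zero,
    Measure.restrict_smul, lintegral_smul_measure, abs_of_nonneg (by positivity), smul_eq_mul]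

theorem le_four_mul_of_le_three_quarters_mul_add {A b : ℝ≥0∞} (hA : A ≠ ⊤)
    (h : A ≤ ENNReal.ofReal (3 / 4) * A + b) : A ≤ 4 * b := by
  rcases eq_or_ne b ⊤ with rfl | hb
  · simp
  · rw [← ENNReal.toReal_le_toReal hA (by finiteness)]
    have h1 := ENNReal.toReal_mono (by finiteness) h
    rw [ENNReal.toReal_add (by finiteness) hb, ENNReal.toReal_mul,
      ENNReal.toReal_ofReal (by norm_num)] at h1
    rw [ENNReal.toReal_mul, ENNReal.toReal_ofNat]
    linarith

variable {n D : ℝ → ℝ} {c M q : ℝ}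

theorem setLIntegral_Ioi_le_of_dyadic (hn0 : ∀ t, 0 ≤ n t) (hD0 : ∀ t, 0 ≤ D t)
    (hnm : Measurable n) (hDm : Measurable D) (hc : 0 ≤ c) (hq : 1 ≤ q)
    (hM : ∀ t, 0 < t → n t ≤ M / t)
    (h : ∀ t, 0 < t → n t ≤ n (2 * t) + c * √t * D t) {ε : ℝ} (hε : 0 < ε) :
    (∫⁻ t in Ioi ε, ENNReal.ofReal (t ^ (q / 2 - 1) * n t ^ q)) ^ (1 / q) ≤
      ENNReal.ofReal (4 * c) *
        (∫⁻ t in Ioi ε, ENNReal.ofReal (t ^ (q - 1) * D t ^ q)) ^ (1 / q) := by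
  have hq0 : 0 < q := one_pos.trans_le hq
  have hM0 : 0 ≤ M := by simpa using (hn0 1).trans (hM 1 one_pos)
  let φ (t : ℝ) : ℝ≥0∞ := ENNReal.ofReal (t ^ (1 / 2 - 1 / q) * n t)
  let ψ (t : ℝ) : ℝ≥0∞ := ENNReal.ofReal (t ^ (1 - 1 / q) * D t)
  have hφm : Measurable φ := by fun_prop
  have hψm : Measurable ψ := by fun_prop
  have pw {a x t : ℝ} (ht : 0 < t) (hx : 0 ≤ x) :
      ENNReal.ofReal (t ^ (a - 1 / q) * x) ^ q = ENNReal.ofReal (t ^ (a * q - 1) * x ^ q) := by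
    rw [ENNReal.ofReal_rpow_of_nonneg (by positivity) hq0.le,
      Real.mul_rpow (by positivity) hx, ← Real.rpow_mul ht.le, sub_mul, one_div_mul_cancel hq0.ne']
  have hφ : ∫⁻ t in Ioi ε, ENNReal.ofReal (t ^ (q / 2 - 1) * n t ^ q) =
      ∫⁻ t in Ioi ε, φ t ^ q :=
    setLIntegral_congr_fun measurableSet_Ioi fun t ht => by
      simp only [φ]
      rw [pw (hε.trans ht) (hn0 t)]
      ring_nf
  have hψ : ∫⁻ t in Ioi ε, ENNReal.ofReal (t ^ (q - 1) * D t ^ q) = ∫⁻ t in Ioi ε, ψ t ^ q :=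
    setLIntegral_congr_fun measurableSet_Ioi fun t ht => by
      simp only [ψ]
      rw [pw (hε.trans ht) (hD0 t), one_mul]
  have hfin : (∫⁻ t in Ioi ε, φ t ^ q) ^ (1 / q) ≠ ⊤ := by
    refine ENNReal.rpow_ne_top_of_nonneg (by positivity) (ne_of_lt ?_)
    have hi : IntegrableOn (fun t : ℝ => t ^ (-(q / 2) - 1) * M ^ q) (Ioi ε) :=
      (integrableOn_Ioi_rpow_of_lt (by linarith) hε).mul_const _
    refine lt_of_le_of_lt ?_ hi.lintegral_lt_top
    rw [← hφ]
    refine setLIntegral_mono' measurableSet_Ioi fun t ht => ENNReal.ofReal_le_ofReal ?_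
    have ht0 : 0 < t := hε.trans ht
    calc t ^ (q / 2 - 1) * n t ^ q ≤ t ^ (q / 2 - 1) * (M / t) ^ q := by
          gcongr
          exacts [hn0 t, hM t ht0]
      _ = t ^ (-(q / 2) - 1) * M ^ q := by
          rw [Real.div_rpow hM0 ht0.le, show -(q / 2) - 1 = (q / 2 - 1) - q by ring,
            Real.rpow_sub ht0 _ q]
          ring
  have hχ : (∫⁻ t in Ioi ε, (ENNReal.ofReal (2 ^ (1 / q - 1 / 2) : ℝ) * φ (2 * t)) ^ q) ^ (1 / q) ≤
      ENNReal.ofReal (3 / 4) * (∫⁻ t in Ioi ε, φ t ^ q) ^ (1 / q) := by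
    have hs : ENNReal.ofReal (2 ^ (1 / q - 1 / 2) : ℝ) ^ q * ENNReal.ofReal 2⁻¹ ≤
        ENNReal.ofReal (3 / 4) ^ q := by
      have h2 : ((2 : ℝ) ^ (1 / q - 1 / 2)) ^ q * 2⁻¹ = ((2 : ℝ) ^ (-(1 / 2) : ℝ)) ^ q := by
        rw [← Real.rpow_mul zero_le_two, ← Real.rpow_mul zero_le_two, sub_mul,
          one_div_mul_cancel hq0.ne', ← Real.rpow_neg_one 2, ← Real.rpow_add two_pos]
        ring_nf
      rw [ENNReal.ofReal_rpow_of_nonneg (by positivity) hq0.le,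
        ENNReal.ofReal_rpow_of_nonneg (by positivity) hq0.le,
        ← ENNReal.ofReal_mul (by positivity), h2]
      gcongr
      rw [Real.rpow_neg zero_le_two, ← Real.sqrt_eq_rpow]
      refine inv_le_of_inv_le₀ (by norm_num) (Real.le_sqrt_of_sq_le (by norm_num))
    rw [one_div, ENNReal.rpow_inv_le_iff hq0, ENNReal.mul_rpow_of_nonneg _ _ hq0.le,
      ENNReal.rpow_inv_rpow hq0.ne']
    simp_rw [ENNReal.mul_rpow_of_nonneg _ _ hq0.le]
    rw [lintegral_const_mul _ (by fun_prop), setLIntegral_Ioi_comp_two_mul (hφm.pow_const q),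
      ← mul_assoc]
    refine mul_le_mul' (by simpa using hs) (lintegral_mono_set (Ioi_subset_Ioi (by linarith)))
  have hpt : ∀ t ∈ Ioi ε, φ t ≤ ENNReal.ofReal (2 ^ (1 / q - 1 / 2) : ℝ) * φ (2 * t) +
      ENNReal.ofReal c * ψ t := fun t ht => by
    have ht0 : 0 < t := hε.trans ht
    have := hn0 (2 * t)
    have := hD0 t
    simp only [φ, ψ]
    rw [← ENNReal.ofReal_mul (by positivity), ← ENNReal.ofReal_mul hc,
      ← ENNReal.ofReal_add (by positivity) (by positivity)]
    refine ENNReal.ofReal_le_ofReal ?_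
    have e1 : (2 : ℝ) ^ (1 / q - 1 / 2) * ((2 * t) ^ (1 / 2 - 1 / q) * n (2 * t)) =
        t ^ (1 / 2 - 1 / q) * n (2 * t) := by
      rw [Real.mul_rpow zero_le_two ht0.le, ← mul_assoc, ← mul_assoc, ← Real.rpow_add two_pos]
      norm_num
    have e2 : t ^ (1 - 1 / q) = t ^ (1 / 2 - 1 / q) * √t := by
      rw [Real.sqrt_eq_rpow, ← Real.rpow_add ht0]
      ring_nf
    rw [e1, e2]
    calc _ ≤ t ^ (1 / 2 - 1 / q) * (n (2 * t) + c * √t * D t) := by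
          gcongr
          exact h t ht0
      _ = _ := by ring
  rw [hφ, hψ]
  have key : (∫⁻ t in Ioi ε, φ t ^ q) ^ (1 / q) ≤
      ENNReal.ofReal (3 / 4) * (∫⁻ t in Ioi ε, φ t ^ q) ^ (1 / q) +
        ENNReal.ofReal c * (∫⁻ t in Ioi ε, ψ t ^ q) ^ (1 / q) := by
    calc _ ≤ (∫⁻ t in Ioi ε, (ENNReal.ofReal (2 ^ (1 / q - 1 / 2) : ℝ) * φ (2 * t) +
          ENNReal.ofReal c * ψ t) ^ q) ^ (1 / q) :=
          ENNReal.rpow_le_rpow (setLIntegral_mono' measurableSet_Ioi fun t ht =>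
            ENNReal.rpow_le_rpow (hpt t ht) hq0.le) (by positivity)
      _ ≤ _ := ENNReal.lintegral_Lp_add_le (by fun_prop) (by fun_prop) hq
      _ ≤ _ := add_le_add hχ (le_of_eq ?_)
    simp_rw [ENNReal.mul_rpow_of_nonneg _ _ hq0.le]
    rw [lintegral_const_mul _ (by fun_prop), ENNReal.mul_rpow_of_nonneg _ _ (by positivity),
      one_div, ENNReal.rpow_rpow_inv hq0.ne']
  refine (le_four_mul_of_le_three_quarters_mul_add hfin key).trans_eq ?_
  rw [ENNReal.ofReal_mul (by norm_num), ENNReal.ofReal_ofNat, mul_assoc]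

/-- An abstract weighted inequality: a dyadic recursion, together with decay at infinity,
controls a weighted norm of `n` by one of `D`. -/
theorem setLIntegral_Ioi_zero_le_of_dyadic (hn0 : ∀ t, 0 ≤ n t) (hD0 : ∀ t, 0 ≤ D t)
    (hnm : Measurable n) (hDm : Measurable D) (hc : 0 ≤ c) (hq : 1 ≤ q)
    (hM : ∀ t, 0 < t → n t ≤ M / t)
    (h : ∀ t, 0 < t → n t ≤ n (2 * t) + c * √t * D t) :
    (∫⁻ t in Ioi (0 : ℝ), ENNReal.ofReal (t ^ (q / 2 - 1) * n t ^ q)) ^ (1 / q) ≤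
      ENNReal.ofReal (4 * c) *
        (∫⁻ t in Ioi (0 : ℝ), ENNReal.ofReal (t ^ (q - 1) * D t ^ q)) ^ (1 / q) := by
  have hq0 : 0 < q := one_pos.trans_le hq
  have hU : Ioi (0 : ℝ) = ⋃ k : ℕ, Ioi (1 / ((k : ℝ) + 1)) := by
    ext t
    simp only [mem_Ioi, mem_iUnion]
    exact ⟨fun ht => exists_nat_one_div_lt ht, fun ⟨k, hk⟩ => lt_trans (by positivity) hk⟩
  have hmono : Monotone fun k : ℕ => Ioi (1 / ((k : ℝ) + 1)) := fun i j hij =>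
    Ioi_subset_Ioi (one_div_le_one_div_of_le (by positivity) (by gcongr))
  rw [one_div, ENNReal.rpow_inv_le_iff hq0]
  conv_lhs => rw [hU, setLIntegral_iUnion_of_directed _ hmono.directed_le]
  refine iSup_le fun k => ?_
  rw [← ENNReal.rpow_inv_le_iff hq0, ← one_div]
  refine (setLIntegral_Ioi_le_of_dyadic hn0 hD0 hnm hDm hc hq hM h (by positivity)).trans ?_
  gcongr
  positivity

end Dyadic

section Norms

theorem eLpNorm_eq_ofReal_integral_rpow {α Y : Type*} [MeasurableSpace α] {μ : Measure α}
    [NormedAddCommGroup Y] {p : ℝ} (hp : 1 ≤ p) {g : α → Y} (hg : MemLp g (.ofReal p) μ) :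
    eLpNorm g (.ofReal p) μ = ENNReal.ofReal ((∫ h, ‖g h‖ ^ p ∂μ) ^ (1 / p)) := by
  have hp0 : 0 < p := one_pos.trans_le hp
  rw [hg.eLpNorm_eq_integral_rpow_norm (ENNReal.ofReal_pos.2 hp0).ne' ofReal_ne_top,
    toReal_ofReal hp0.le, one_div]

theorem eLpNorm_add_eLpNorm_le {α Y : Type*} [MeasurableSpace α] {μ : Measure α}
    [NormedAddCommGroup Y] {p : ℝ} (hp : 1 ≤ p) {g g' : α → Y} (hg : MemLp g (.ofReal p) μ)
    (hg' : MemLp g' (.ofReal p) μ) :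
    eLpNorm g (.ofReal p) μ + eLpNorm g' (.ofReal p) μ ≤
      ENNReal.ofReal (2 * (∫ h, (‖g h‖ ^ p + ‖g' h‖ ^ p) ∂μ) ^ (1 / p)) := by
  have hp0 : 0 < p := one_pos.trans_le hp
  have hi {F : α → Y} (hF : MemLp F (.ofReal p) μ) : Integrable (fun h => ‖F h‖ ^ p) μ := by
    have h := hF.integrable_norm_rpow (ENNReal.ofReal_pos.2 hp0).ne' ofReal_ne_top
    rwa [toReal_ofReal hp0.le] at h
  have h0 (F : α → Y) : 0 ≤ ∫ h, ‖F h‖ ^ p ∂μ := integral_nonneg fun h => by positivity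
  have := h0 g
  have := h0 g'
  rw [eLpNorm_eq_ofReal_integral_rpow hp hg, eLpNorm_eq_ofReal_integral_rpow hp hg',
    ← ENNReal.ofReal_add (by positivity) (by positivity), integral_add (hi hg) (hi hg'), two_mul]
  gcongr <;> linarith

variable {X : Type*} [NormedAddCommGroup X] [NormedSpace ℝ X] {p : ℝ} {g g' : HR → X}

theorem memLp_conv_Qker (hp : 1 ≤ p) (hg : Continuous g) (hgc : HasCompactSupport g) {t : ℝ}
    (ht : 0 < t) : MemLp (conv (Qker t) g) (.ofReal p) := by
  have hm := (continuous_Qker ht).measurable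
  refine ⟨(stronglyMeasurable_conv hm hg.stronglyMeasurable).aestronglyMeasurable,
    (eLpNorm_conv_le hp hm hg.stronglyMeasurable).trans_lt (ENNReal.mul_lt_top ?_ ?_)⟩
  · exact (lintegral_enorm_Qker_le ht).trans_lt ofReal_lt_top
  · exact (hg.memLp_of_hasCompactSupport hgc).2

theorem measurable_integral_norm_conv_Qker_rpow (hg : Continuous g) :
    Measurable fun t => ∫ h, ‖conv (Qker t) g h‖ ^ p := by
  have h := (stronglyMeasurable_conv_Qker hg.stronglyMeasurable).norm.measurable.pow_const p
  exact (h.stronglyMeasurable.integral_prod_right' (ν := volume)).measurable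

theorem measurable_integral_norm_conv_Qker_rpow_add (hg : Continuous g) (hg' : Continuous g') :
    Measurable fun t => ∫ h, (‖conv (Qker t) g h‖ ^ p + ‖conv (Qker t) g' h‖ ^ p) := by
  have h := ((stronglyMeasurable_conv_Qker hg.stronglyMeasurable).norm.measurable.pow_const p).add
    ((stronglyMeasurable_conv_Qker hg'.stronglyMeasurable).norm.measurable.pow_const p)
  exact (h.stronglyMeasurable.integral_prod_right' (ν := volume)).measurable

end Norms

end HR

open HR in
/-- Lemma 2.5: the integrated increment estimate. -/
theorem integrated_increment_lemma :
    ∃ C : ℝ, 0 < C ∧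
      ∀ p q : ℝ, 1 ≤ p → 1 ≤ q →
        ∀ (X : Type) [NormedAddCommGroup X] [NormedSpace ℝ X] [CompleteSpace X],
          ∀ f : HR → X, ContDiff ℝ (⊤ : ℕ∞) f → HasCompactSupport f →
            (∫⁻ t in Set.Ioi (0 : ℝ),
                ENNReal.ofReal
                  (t ^ (q / 2 - 1) *
                    ((∫ h : HR, ‖conv (Qker t) f h‖ ^ p) ^ (1 / p)) ^ q)) ^ (1 / q) ≤
              ENNReal.ofReal C *
                (∫⁻ t in Set.Ioi (0 : ℝ),
                  ENNReal.ofReal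
                    (t ^ (q - 1) *
                      ((∫ h : HR, (‖conv (Qker t) (da f) h‖ ^ p + ‖conv (Qker t) (db f) h‖ ^ p))
                          ^ (1 / p)) ^ q)) ^ (1 / q) := by
  set I : ℝ := ∫ u, Pker 1 u * √|u| with hI
  have hI0 : 0 ≤ I := integral_nonneg fun u =>
    mul_nonneg (Pker_nonneg one_pos u) (Real.sqrt_nonneg _)
  refine ⟨4 * (4 * (I + 1)), by positivity, fun p q hp hq X _ _ _ f hf hfc => ?_⟩
  have ca := continuous_da hf
  have cb := continuous_db hf
  have n0 (t : ℝ) : 0 ≤ (∫ h : HR, ‖conv (Qker t) f h‖ ^ p) ^ (1 / p) :=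
    Real.rpow_nonneg (integral_nonneg fun h => by positivity) _
  have D0 (t : ℝ) : 0 ≤ (∫ h : HR, (‖conv (Qker t) (da f) h‖ ^ p +
      ‖conv (Qker t) (db f) h‖ ^ p)) ^ (1 / p) :=
    Real.rpow_nonneg (integral_nonneg fun h => by positivity) _
  have hfL : MemLp f (.ofReal p) := hf.continuous.memLp_of_hasCompactSupport hfc
  have hn {t : ℝ} (ht : 0 < t) := eLpNorm_eq_ofReal_integral_rpow hp
    (memLp_conv_Qker hp hf.continuous hfc ht)
  refine setLIntegral_Ioi_zero_le_of_dyadic (M := (eLpNorm f (.ofReal p)).toReal) n0 D0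
    ((measurable_integral_norm_conv_Qker_rpow hf.continuous).pow_const _)
    ((measurable_integral_norm_conv_Qker_rpow_add ca cb).pow_const _) (by positivity) hq
    (fun t ht => ?_) fun t ht => ?_
  · have h1 := (eLpNorm_conv_le hp (continuous_Qker ht).measurable
      hf.continuous.stronglyMeasurable).trans (mul_le_mul_left (lintegral_enorm_Qker_le ht) _)
    rw [hn ht, ← ENNReal.ofReal_toReal hfL.2.ne, ← ENNReal.ofReal_mul (by positivity)] at h1
    have h2 := (ENNReal.ofReal_le_ofReal_iff (by positivity)).1 h1
    rwa [inv_mul_eq_div] at h2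
  · have h1 := (eLpNorm_conv_Qker_le hp hf hfc ht).trans (add_le_add_right (mul_le_mul_right
      (mul_le_mul_right (eLpNorm_add_eLpNorm_le hp
        (memLp_conv_Qker hp ca (hasCompactSupport_da hfc) ht)
        (memLp_conv_Qker hp cb (hasCompactSupport_db hfc) ht)) 2) _) _)
    have h22 : (2 : ENNReal) = ENNReal.ofReal 2 := by simp
    have hD := D0 t
    have hn2 := n0 (2 * t)
    rw [hn ht, hn (by positivity : 0 < 2 * t), h22,
      ← ENNReal.ofReal_mul (by positivity), ← ENNReal.ofReal_mul (by positivity),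
      ← ENNReal.ofReal_add hn2 (by positivity)] at h1
    refine ((ENNReal.ofReal_le_ofReal_iff (by positivity)).1 h1).trans ?_
    have := mul_nonneg (Real.sqrt_nonneg t) hD
    rw [← hI]
    refine add_le_add_right ?_ _
    nlinarith
end

section
/- For every η ∈ (0,1), q ∈ [2,∞) and p ∈ (1,q] there exists a constant K = K(η,p,q) ∈ (0,∞) with the following property. If (X,‖·‖_X) is a Banach space satisfying δ_X(ε) ≥ (ηε)^q for every ε ∈ (0,1), then for every n ∈ ℕ and every f : ℍ → X one has (∑_{k=1}^{n²} k^{−1−q/2} (∑_{x ∈ B_n} ‖f(xc^k) − f(x)‖_X^p)^{q/p})^{1/q} ≤ K (∑_{x ∈ B_{21n}} (‖f(xa) − f(x)‖_X^p + ‖f(xb) − f(x)‖_X^p))^{1/p}. -/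
/-- The discrete Heisenberg group, as ℤ³ with the Heisenberg multiplication
(equivalently, unit upper-triangular 3×3 integer matrices). -/
@[ext]
structure DH where
  x : ℤ
  y : ℤ
  z : ℤ

namespace DH

instance : Mul DH := ⟨fun a b => ⟨a.x + b.x, a.y + b.y, a.z + b.z + a.x * b.y⟩⟩
instance : One DH := ⟨⟨0, 0, 0⟩⟩
instance : Inv DH := ⟨fun a => ⟨-a.x, -a.y, -a.z + a.x * a.y⟩⟩

lemma mul_def (a b : DH) : a * b = ⟨a.x + b.x, a.y + b.y, a.z + b.z + a.x * b.y⟩ := rfl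
lemma one_def : (1 : DH) = ⟨0, 0, 0⟩ := rfl
lemma inv_def (a : DH) : a⁻¹ = ⟨-a.x, -a.y, -a.z + a.x * a.y⟩ := rfl

instance : Group DH where
  mul_assoc a b c := by
    simp only [mul_def, mk.injEq]
    refine ⟨by ring, by ring, by ring⟩
  one_mul a := by simp [mul_def, one_def]
  mul_one a := by simp [mul_def, one_def]
  inv_mul_cancel a := by
    simp only [mul_def, inv_def, one_def, mk.injEq]
    refine ⟨by ring, by ring, by ring⟩

/-- The generator `a`. -/
def gA : DH := ⟨1, 0, 0⟩

/-- The generator `b`. -/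
def gB : DH := ⟨0, 1, 0⟩

/-- The commutator `c = aba⁻¹b⁻¹`, a generator of the center. -/
def gC : DH := gA * gB * gA⁻¹ * gB⁻¹

/-- Word length with respect to the symmetric generating set `{a, b, a⁻¹, b⁻¹}`. -/
noncomputable def wordLen (g : DH) : ℕ :=
  sInf {n | ∃ l : List DH, l.length = n ∧
    (∀ s ∈ l, s ∈ ({gA, gB, gA⁻¹, gB⁻¹} : Set DH)) ∧ l.prod = g}

/-- The left-invariant word metric on the discrete Heisenberg group. -/
noncomputable def dW (g h : DH) : ℕ := wordLen (g⁻¹ * h)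

/-- The closed ball of radius `n` centered at the identity. -/
def Ball (n : ℕ) : Set DH := {g | dW g 1 ≤ n}

end DH

/-- `X` has modulus of uniform convexity at least `(η ε) ^ q`. -/
def HasPowerModulus (η q : ℝ) (X : Type*) [NormedAddCommGroup X] : Prop :=
  ∀ ε ∈ Set.Ioo (0 : ℝ) 1, ∀ x y : X, ‖x‖ = 1 → ‖y‖ = 1 → ε ≤ ‖x - y‖ →
    ‖x + y‖ ≤ 2 * (1 - (η * ε) ^ q)

lemma rpow_sub_le_rpow_sub_mul {a h s : ℝ} (ha : 0 < a) (hh : 0 ≤ h) (hha : h ≤ a) (hs : 1 ≤ s) :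
    (a - h) ^ s ≤ a ^ s - a ^ (s - 1) * h := by
  have h1 : 0 ≤ 1 - h / a := by
    rw [sub_nonneg, div_le_one ha]; exact hha
  have h2 : (1 - h / a) ^ s ≤ 1 - h / a := by
    have := Real.rpow_le_rpow_of_exponent_ge' h1 (by linarith [div_nonneg hh ha.le])
      zero_le_one hs
    simpa using this
  have h3 : a - h = a * (1 - h / a) := by field_simp
  rw [h3, Real.mul_rpow ha.le h1, Real.rpow_sub_one ha.ne']
  calc a ^ s * (1 - h / a) ^ s ≤ a ^ s * (1 - h / a) := by gcongr
    _ = a ^ s - a ^ s / a * h := by field_simp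

lemma rpow_midpoint_le {p x y : ℝ} (hp : 1 ≤ p) (hx : 0 ≤ x) (hy : 0 ≤ y) :
    ((x + y) / 2) ^ p ≤ (x ^ p + y ^ p) / 2 := by
  have := (convexOn_rpow hp).2 hx hy (by norm_num : (0 : ℝ) ≤ 1 / 2)
    (by norm_num : (0 : ℝ) ≤ 1 / 2) (by norm_num)
  simp only [smul_eq_mul] at this
  rw [show (1 : ℝ) / 2 * x + 1 / 2 * y = (x + y) / 2 by ring] at this
  linarith

lemma exists_rpow_midpoint_gap_of_le_two {p : ℝ} (hp : 1 < p) (hp2 : p ≤ 2) :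
    ∃ c > 0, ∀ r ∈ Set.Icc (0 : ℝ) 1,
      ((1 + r) / 2) ^ p + c * (1 - r) ^ 2 ≤ (1 + r ^ p) / 2 := by
  have hconv : ConvexOn ℝ (Set.Icc (0 : ℝ) 1) (fun t ↦ t ^ p - p * (p - 1) / 2 * t ^ 2) := by
    refine convexOn_of_hasDerivWithinAt2_nonneg (convex_Icc 0 1)
      (f' := fun t ↦ p * t ^ (p - 1) - p * (p - 1) * t)
      (f'' := fun t ↦ p * ((p - 1) * t ^ (p - 1 - 1)) - p * (p - 1)) ?_ ?_ ?_ ?_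
    · have : Continuous (fun t : ℝ ↦ t ^ p) := Real.continuous_rpow_const (by linarith)
      fun_prop
    · intro t ht
      rw [interior_Icc] at ht
      have h1 := Real.hasDerivAt_rpow_const (x := t) (p := p) (Or.inl ht.1.ne')
      have h2 := ((hasDerivAt_id t).pow 2).const_mul (p * (p - 1) / 2)
      refine ((h1.sub h2).congr_deriv ?_).hasDerivWithinAt
      simp; ring
    · intro t ht
      rw [interior_Icc] at ht
      have h1 := (Real.hasDerivAt_rpow_const (x := t) (p := p - 1)
        (Or.inl ht.1.ne')).const_mul p
      have h2 := (hasDerivAt_id t).const_mul (p * (p - 1))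
      refine ((h1.sub h2).congr_deriv ?_).hasDerivWithinAt
      simp
    · intro t ht
      rw [interior_Icc] at ht
      have h1 : 1 ≤ t ^ (p - 1 - 1) :=
        Real.one_le_rpow_of_pos_of_le_one_of_nonpos ht.1 ht.2.le (by linarith)
      have h2 : 0 ≤ p * (p - 1) := by nlinarith
      nlinarith
  refine ⟨p * (p - 1) / 8, by nlinarith, fun r hr ↦ ?_⟩
  have := hconv.2 (Set.right_mem_Icc.2 zero_le_one) hr (by norm_num : (0 : ℝ) ≤ 1 / 2)
    (by norm_num : (0 : ℝ) ≤ 1 / 2) (by norm_num)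
  simp only [smul_eq_mul, Real.one_rpow] at this
  rw [show (1 : ℝ) / 2 * 1 + 1 / 2 * r = (1 + r) / 2 by ring] at this
  linarith

lemma exists_rpow_midpoint_gap_of_two_le {p : ℝ} (hp : 2 ≤ p) :
    ∃ c > 0, ∀ r ∈ Set.Icc (0 : ℝ) 1,
      ((1 + r) / 2) ^ p + c * (1 - r) ^ 2 ≤ (1 + r ^ p) / 2 := by
  refine ⟨(1 / 2) ^ (p / 2 - 1) / 4, by positivity, fun r hr ↦ ?_⟩
  have hpow (x : ℝ) (hx : 0 ≤ x) : (x ^ 2) ^ (p / 2) = x ^ p := by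
    rw [← Real.rpow_natCast, ← Real.rpow_mul hx]; congr 1; push_cast; ring
  have h1 := rpow_sub_le_rpow_sub_mul (a := (1 + r ^ 2) / 2) (h := (1 - r) ^ 2 / 4)
    (s := p / 2) (by positivity) (by positivity) (by nlinarith [hr.1]) (by linarith)
  rw [show (1 + r ^ 2) / 2 - (1 - r) ^ 2 / 4 = ((1 + r) / 2) ^ 2 by ring,
    hpow _ (by linarith [hr.1])] at h1
  have h2 := rpow_midpoint_le (p := p / 2) (x := 1) (y := r ^ 2) (by linarith) zero_le_one
    (by positivity)
  rw [hpow _ hr.1, Real.one_rpow] at h2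
  have h3 : (1 / 2 : ℝ) ^ (p / 2 - 1) ≤ ((1 + r ^ 2) / 2) ^ (p / 2 - 1) := by
    apply Real.rpow_le_rpow (by norm_num) _ (by linarith)
    nlinarith [sq_nonneg r]
  nlinarith [mul_le_mul_of_nonneg_right h3 (show 0 ≤ (1 - r) ^ 2 / 4 by positivity)]

lemma exists_rpow_midpoint_gap {p : ℝ} (hp : 1 < p) :
    ∃ c > 0, ∀ r ∈ Set.Icc (0 : ℝ) 1,
      ((1 + r) / 2) ^ p + c * (1 - r) ^ 2 ≤ (1 + r ^ p) / 2 :=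
  (le_total p 2).elim (exists_rpow_midpoint_gap_of_le_two hp) exists_rpow_midpoint_gap_of_two_le

/-- The two-point inequality for a unit vector and a vector of the unit ball. -/
lemma exists_two_point_unit {η p q : ℝ} (hη : 0 < η) (hp : 1 < p) (hq : 2 ≤ q) :
    ∃ κ > 0, ∀ (X : Type) [NormedAddCommGroup X] [NormedSpace ℝ X], HasPowerModulus η q X →
      ∀ x y : X, ‖x‖ = 1 → ‖y‖ ≤ 1 →
        ‖(1 / 2 : ℝ) • (x + y)‖ ^ p + κ * ‖x - y‖ ^ q ≤ (1 + ‖y‖ ^ p) / 2 := by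
  obtain ⟨c, hc, hgap⟩ := exists_rpow_midpoint_gap hp
  refine ⟨min (c * (1 / 4) ^ q) ((1 / 2) ^ (p - 1) * (1 / 2) * (η / 4) ^ q), by positivity,
    fun X _ _ hX x y hx hy ↦ ?_⟩
  set κ := min (c * (1 / 4) ^ q) ((1 / 2) ^ (p - 1) * (1 / 2) * (η / 4) ^ q) with hκ
  set d := ‖x - y‖ with hd
  set r := ‖y‖ with hr
  have hr0 : 0 ≤ r := norm_nonneg _
  have hd0 : 0 ≤ d := norm_nonneg _
  have hd2 : d ≤ 2 := (norm_sub_le x y).trans (by linarith)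
  have hmid : ‖(1 / 2 : ℝ) • (x + y)‖ ≤ (1 + r) / 2 := by
    rw [norm_smul]
    have := norm_add_le x y
    norm_num
    linarith
  rcases le_or_gt (d / 4) (1 - r) with hcase | hcase
  · have h1 : κ * d ^ q ≤ c * (1 - r) ^ 2 := by
      calc κ * d ^ q ≤ c * (1 / 4) ^ q * d ^ q := by
            gcongr; exact min_le_left _ _
        _ = c * (d / 4) ^ q := by
            rw [mul_assoc, ← Real.mul_rpow (by norm_num) hd0]; congr 2; ring
        _ ≤ c * (d / 4) ^ (2 : ℝ) := by
            gcongr 1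
            exact Real.rpow_le_rpow_of_exponent_ge' (by positivity) (by linarith) (by norm_num) hq
        _ ≤ c * (1 - r) ^ 2 := by
            rw [Real.rpow_two]; gcongr
    have h2 := Real.rpow_le_rpow (norm_nonneg _) hmid (by linarith : 0 ≤ p)
    linarith [hgap r ⟨hr0, hy⟩]
  · have hdpos : 0 < d := by linarith
    have hrhalf : 1 / 2 ≤ r := by linarith
    have hrpos : 0 < r := by linarith
    set y' := r⁻¹ • y with hy'
    have hyy' : y = r • y' := by rw [hy', smul_smul, mul_inv_cancel₀ hrpos.ne', one_smul]
    have hy'1 : ‖y'‖ = 1 := by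
      rw [hy', norm_smul, norm_inv, Real.norm_of_nonneg hr0, ← hr, inv_mul_cancel₀ hrpos.ne']
    have hyy'n : ‖y' - y‖ = 1 - r := by
      have : y' - y = (1 - r) • y' := by rw [hyy', sub_smul, one_smul]
      rw [this, norm_smul, hy'1, Real.norm_of_nonneg (by linarith), mul_one]
    have hsep : d / 4 ≤ ‖x - y'‖ := by
      have h := norm_sub_le_norm_sub_add_norm_sub x y' y
      rw [hyy'n, ← hd] at h
      linarith
    have hδ := hX (d / 4) ⟨by positivity, by linarith⟩ x y' hx hy'1 hsep
    set δ := (η * (d / 4)) ^ q with hδd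
    have hδ0 : 0 ≤ δ := by positivity
    have hnorm : ‖(1 / 2 : ℝ) • (x + y)‖ ≤ (1 + r) / 2 - r * δ := by
      have : (1 / 2 : ℝ) • (x + y) = (r / 2) • (x + y') + ((1 - r) / 2) • x := by
        rw [hyy']; module
      rw [this]
      refine (norm_add_le _ _).trans ?_
      rw [norm_smul, norm_smul, hx, Real.norm_of_nonneg (by positivity),
        Real.norm_of_nonneg (by linarith)]
      nlinarith
    have h0 : r * δ ≤ (1 + r) / 2 := by linarith [norm_nonneg ((1 / 2 : ℝ) • (x + y))]
    have h1 := (Real.rpow_le_rpow (norm_nonneg _) hnorm (by linarith : 0 ≤ p)).trans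
      (rpow_sub_le_rpow_sub_mul (by linarith) (by positivity) h0 hp.le)
    have h2 := rpow_midpoint_le hp.le zero_le_one hr0
    rw [Real.one_rpow] at h2
    have h3 : κ * d ^ q ≤ ((1 + r) / 2) ^ (p - 1) * (r * δ) := by
      calc κ * d ^ q ≤ (1 / 2) ^ (p - 1) * (1 / 2) * (η / 4) ^ q * d ^ q := by
            gcongr; exact min_le_right _ _
        _ = (1 / 2) ^ (p - 1) * (1 / 2 * δ) := by
            rw [mul_assoc, ← Real.mul_rpow (by positivity) hd0, hδd, mul_assoc,
              show η / 4 * d = η * (d / 4) by ring]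
        _ ≤ _ := by
            have : (1 / 2 : ℝ) ≤ (1 + r) / 2 := by linarith
            have : 0 ≤ p - 1 := by linarith
            gcongr
    linarith

/-- A homogeneous two-point inequality of exponents `p` and `q`. -/
lemma exists_two_point {η p q : ℝ} (hη : 0 < η) (hp : 1 < p) (hq : 2 ≤ q) :
    ∃ κ > 0, ∀ (X : Type) [NormedAddCommGroup X] [NormedSpace ℝ X], HasPowerModulus η q X →
      ∀ x y : X, ‖(1 / 2 : ℝ) • (x + y)‖ ^ p + κ * (‖x - y‖ ^ q * max ‖x‖ ‖y‖ ^ (p - q)) ≤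
        (‖x‖ ^ p + ‖y‖ ^ p) / 2 := by
  obtain ⟨κ, hκ, H⟩ := exists_two_point_unit hη hp hq
  refine ⟨κ, hκ, fun X _ _ hX ↦ ?_⟩
  have main : ∀ x y : X, ‖y‖ ≤ ‖x‖ →
      ‖(1 / 2 : ℝ) • (x + y)‖ ^ p + κ * (‖x - y‖ ^ q * ‖x‖ ^ (p - q)) ≤
        (‖x‖ ^ p + ‖y‖ ^ p) / 2 := by
    intro x y hyx
    rcases (norm_nonneg x).eq_or_lt with h0 | h0
    · have hx : x = 0 := norm_eq_zero.1 h0.symm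
      have hy : y = 0 := by
        rw [← h0] at hyx; exact norm_le_zero_iff.1 hyx
      subst hx hy
      simp [Real.zero_rpow (by linarith : p ≠ 0), Real.zero_rpow (by linarith : q ≠ 0)]
    · set s := ‖x‖ with hs
      have hsc (z : X) : ‖z‖ = s * ‖s⁻¹ • z‖ := by
        rw [norm_smul, norm_inv, Real.norm_of_nonneg h0.le, mul_inv_cancel_left₀ h0.ne']
      have h1 : ‖s⁻¹ • x‖ = 1 := by
        rw [norm_smul, norm_inv, Real.norm_of_nonneg h0.le, inv_mul_cancel₀ h0.ne']
      have h2 : ‖s⁻¹ • y‖ ≤ 1 := by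
        rw [norm_smul, norm_inv, Real.norm_of_nonneg h0.le, inv_mul_le_one₀ h0]; exact hyx
      have h3 := H X hX _ _ h1 h2
      rw [← smul_sub, ← smul_add, smul_comm] at h3
      rw [hsc y, hsc (x - y), hsc ((1 / 2 : ℝ) • (x + y)), Real.mul_rpow h0.le (norm_nonneg _),
        Real.mul_rpow h0.le (norm_nonneg _), Real.mul_rpow h0.le (norm_nonneg _)]
      have h4 : s ^ q * s ^ (p - q) = s ^ p := by
        rw [← Real.rpow_add h0]; congr 1; ring
      have h5 : s ^ q * ‖s⁻¹ • (x - y)‖ ^ q * s ^ (p - q) = s ^ p * ‖s⁻¹ • (x - y)‖ ^ q := by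
        rw [← h4]; ring
      rw [h5]
      have := mul_le_mul_of_nonneg_left h3 (by positivity : 0 ≤ s ^ p)
      linarith
  intro x y
  rcases le_total ‖y‖ ‖x‖ with h | h
  · rw [max_eq_left h]; exact main x y h
  · have := main y x h
    rw [max_eq_right h, norm_sub_rev, add_comm x y, add_comm (‖x‖ ^ p)]
    exact this

/-- Finite `ℓ_p`-sums of a space with modulus of power type `q` again have modulus of
power type `q`, when `p ≤ q`. -/
lemma exists_two_point_sum {η p q : ℝ} (hη : 0 < η) (hp : 1 < p) (hq : 2 ≤ q) (hpq : p ≤ q) :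
    ∃ κ > 0, ∀ (X : Type) [NormedAddCommGroup X] [NormedSpace ℝ X], HasPowerModulus η q X →
      ∀ {ι : Type} (s : Finset ι) (u v : ι → X) (P : ℝ), ∑ i ∈ s, ‖u i‖ ^ p ≤ P →
        ∑ i ∈ s, ‖v i‖ ^ p ≤ P →
          (∑ i ∈ s, ‖(1 / 2 : ℝ) • (u i + v i)‖ ^ p) ^ (q / p) +
            κ * (∑ i ∈ s, ‖u i - v i‖ ^ p) ^ (q / p) ≤ P ^ (q / p) := by
  obtain ⟨κ, hκ, H⟩ := exists_two_point hη hp hq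
  have hp0 : 0 < p := by linarith
  have hθ : 1 ≤ q / p := by rwa [le_div_iff₀ hp0, one_mul]
  refine ⟨κ * (2 ^ (q / p - 1))⁻¹, by positivity, fun X _ _ hX ι s u v P hu hv ↦ ?_⟩
  set θ := q / p with hθd
  set M : ι → ℝ := fun i ↦ max ‖u i‖ ‖v i‖ with hM
  have hM0 (i) : 0 ≤ M i := le_max_of_le_left (norm_nonneg _)
  set Q := ∑ i ∈ s, ‖u i - v i‖ ^ q * M i ^ (p - q) with hQ
  have hQ0 : 0 ≤ Q := Finset.sum_nonneg fun i _ ↦ by have := hM0 i; positivity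
  have hP0 : 0 ≤ P := le_trans (Finset.sum_nonneg fun i _ ↦ by positivity) hu
  have hmid : ∑ i ∈ s, ‖(1 / 2 : ℝ) • (u i + v i)‖ ^ p ≤ P - κ * Q := by
    have := Finset.sum_le_sum fun i (_ : i ∈ s) ↦ H X hX (u i) (v i)
    rw [Finset.sum_add_distrib, ← Finset.mul_sum, ← Finset.sum_div, Finset.sum_add_distrib] at this
    linarith
  have hMsum : ∑ i ∈ s, M i ^ p ≤ 2 * P := by
    have : ∑ i ∈ s, M i ^ p ≤ ∑ i ∈ s, (‖u i‖ ^ p + ‖v i‖ ^ p) := by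
      refine Finset.sum_le_sum fun i _ ↦ ?_
      rcases le_total ‖u i‖ ‖v i‖ with h | h
      · simp only [hM, max_eq_right h]
        linarith [Real.rpow_nonneg (norm_nonneg (u i)) p]
      · simp only [hM, max_eq_left h]
        linarith [Real.rpow_nonneg (norm_nonneg (v i)) p]
    rw [Finset.sum_add_distrib] at this
    linarith
  have hzero (i) (h : M i = 0) : ‖u i - v i‖ = 0 := by
    have h1 : ‖u i‖ ≤ 0 := h ▸ le_max_left _ _
    have h2 : ‖v i‖ ≤ 0 := h ▸ le_max_right _ _
    rw [norm_le_zero_iff.1 h1, norm_le_zero_iff.1 h2, sub_zero, norm_zero]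
  have hholder : (∑ i ∈ s, ‖u i - v i‖ ^ p) ^ θ ≤ (2 * P) ^ (θ - 1) * Q := by
    have h := Real.inner_le_weight_mul_Lp_of_nonneg s hθ (fun i ↦ M i ^ p)
      (fun i ↦ (‖u i - v i‖ / M i) ^ p) (fun i ↦ Real.rpow_nonneg (hM0 i) _)
      (fun i ↦ Real.rpow_nonneg (div_nonneg (norm_nonneg _) (hM0 i)) _)
    have e1 : ∀ i, M i ^ p * (‖u i - v i‖ / M i) ^ p = ‖u i - v i‖ ^ p := fun i ↦ by
      rcases eq_or_ne (M i) 0 with h0 | h0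
      · rw [hzero i h0, h0, Real.zero_rpow hp0.ne', zero_mul]
      · rw [← Real.mul_rpow (hM0 i) (div_nonneg (norm_nonneg _) (hM0 i)), mul_div_cancel₀ _ h0]
    have e2 : ∀ i, M i ^ p * ((‖u i - v i‖ / M i) ^ p) ^ θ = ‖u i - v i‖ ^ q * M i ^ (p - q) :=
        fun i ↦ by
      rw [← Real.rpow_mul (div_nonneg (norm_nonneg _) (hM0 i)), hθd, mul_div_cancel₀ _ hp0.ne']
      rcases eq_or_ne (M i) 0 with h0 | h0
      · rw [hzero i h0, h0, Real.zero_rpow hp0.ne', Real.zero_rpow (by linarith : q ≠ 0), zero_mul,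
          zero_mul]
      · have hpos : 0 < M i := lt_of_le_of_ne (hM0 i) h0.symm
        rw [Real.div_rpow (norm_nonneg _) (hM0 i), Real.rpow_sub hpos]
        ring
    simp only [e1, e2] at h
    rw [← hQ] at h
    have hS0 : 0 ≤ ∑ i ∈ s, ‖u i - v i‖ ^ p := Finset.sum_nonneg fun i _ ↦ by positivity
    have hMs0 : 0 ≤ ∑ i ∈ s, M i ^ p := Finset.sum_nonneg fun i _ ↦ Real.rpow_nonneg (hM0 i) _
    calc (∑ i ∈ s, ‖u i - v i‖ ^ p) ^ θ
        ≤ ((∑ i ∈ s, M i ^ p) ^ (1 - θ⁻¹) * Q ^ θ⁻¹) ^ θ :=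
          Real.rpow_le_rpow hS0 h (by linarith)
      _ = (∑ i ∈ s, M i ^ p) ^ (θ - 1) * Q := by
          rw [Real.mul_rpow (by positivity) (by positivity), ← Real.rpow_mul hMs0,
            ← Real.rpow_mul hQ0, inv_mul_cancel₀ (by linarith), Real.rpow_one, sub_mul,
            inv_mul_cancel₀ (by linarith), one_mul]
      _ ≤ (2 * P) ^ (θ - 1) * Q := by
          gcongr
  have hsum0 : 0 ≤ ∑ i ∈ s, ‖(1 / 2 : ℝ) • (u i + v i)‖ ^ p :=
    Finset.sum_nonneg fun i _ ↦ by positivity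
  have hκW : κ * (2 ^ (θ - 1))⁻¹ * (∑ i ∈ s, ‖u i - v i‖ ^ p) ^ θ ≤ P ^ (θ - 1) * (κ * Q) := by
    calc _ ≤ κ * (2 ^ (θ - 1))⁻¹ * ((2 * P) ^ (θ - 1) * Q) := by gcongr
      _ = _ := by
        rw [Real.mul_rpow zero_le_two hP0]
        field_simp
  rcases hP0.eq_or_lt with h0 | h0
  · have hQz : κ * Q = 0 := by nlinarith [mul_nonneg hκ.le hQ0]
    rw [hQz, mul_zero] at hκW
    have := Real.rpow_le_rpow hsum0 hmid (by linarith : 0 ≤ θ)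
    rw [hQz, sub_zero] at this
    linarith
  · have h1 := Real.rpow_le_rpow hsum0 hmid (by linarith : 0 ≤ θ)
    have h2 := rpow_sub_le_rpow_sub_mul h0 (by positivity : 0 ≤ κ * Q) (by linarith) hθ
    linarith

lemma rpow_weighted_add_le {r q x y : ℝ} (hr : r ∈ Set.Ioo (0 : ℝ) 1) (hq : 1 ≤ q) (hx : 0 ≤ x)
    (hy : 0 ≤ y) : (r * x + y) ^ q ≤ r * x ^ q + (1 - r) * ((1 - r) ^ (-q) * y ^ q) := by
  have h1r : 0 < 1 - r := by linarith [hr.2]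
  have := (convexOn_rpow hq).2 (x := x) hx (y := y / (1 - r)) (div_nonneg hy h1r.le) hr.1.le
    h1r.le (by ring)
  simp only [smul_eq_mul, mul_div_cancel₀ _ h1r.ne'] at this
  rwa [Real.div_rpow hy h1r.le, div_eq_inv_mul, ← Real.rpow_neg h1r.le] at this

lemma one_le_one_sub_rpow_neg {r q : ℝ} (hr : r ∈ Set.Ioo (0 : ℝ) 1) (hq : 1 ≤ q) :
    1 ≤ (1 - r) * (1 - r) ^ (-q) := by
  have h1r : 0 < 1 - r := by linarith [hr.2]
  nth_rewrite 1 [← Real.rpow_one (1 - r)]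
  rw [← Real.rpow_add h1r]
  exact Real.one_le_rpow_of_pos_of_le_one_of_nonpos h1r (by linarith [hr.1]) (by linarith)

/-- A discrete Hardy inequality for backward recursions. -/
lemma sum_rpow_le_of_backward_recursion {r q : ℝ} (hr : r ∈ Set.Ioo (0 : ℝ) 1) (hq : 1 ≤ q)
    {x y : ℕ → ℝ} {J : ℕ} (hx : ∀ j, 0 ≤ x j) (hy : ∀ j, 0 ≤ y j)
    (h : ∀ j < J, x j ≤ r * x (j + 1) + y j) :
    ∑ j ∈ Finset.range (J + 1), x j ^ q ≤
      (1 - r) ^ (-q) * (x J ^ q + ∑ j ∈ Finset.range J, y j ^ q) := by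
  have h1r : 0 < 1 - r := by linarith [hr.2]
  set C := (1 - r) ^ (-q)
  have hC : 1 ≤ (1 - r) * C := one_le_one_sub_rpow_neg hr hq
  have h1 : ∑ j ∈ Finset.range J, x j ^ q ≤
      r * ∑ j ∈ Finset.range J, x (j + 1) ^ q + (1 - r) * C * ∑ j ∈ Finset.range J, y j ^ q := by
    rw [Finset.mul_sum, Finset.mul_sum, ← Finset.sum_add_distrib]
    refine Finset.sum_le_sum fun j hj ↦ ?_
    rw [mul_assoc]
    exact (Real.rpow_le_rpow (hx j) (h j (Finset.mem_range.1 hj)) (by linarith)).trans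
      (rpow_weighted_add_le hr hq (hx _) (hy _))
  have h2 := Finset.sum_range_succ (fun j ↦ x j ^ q) J
  have h3 := Finset.sum_range_succ' (fun j ↦ x j ^ q) J
  have h4 : 0 ≤ x 0 ^ q := Real.rpow_nonneg (hx 0) q
  have h5 : 0 ≤ x J ^ q := Real.rpow_nonneg (hx J) q
  have h6 : x J ^ q ≤ (1 - r) * C * x J ^ q := le_mul_of_one_le_left h5 hC
  have h7 : ∑ j ∈ Finset.range J, x (j + 1) ^ q ≤ ∑ j ∈ Finset.range (J + 1), x j ^ q := by
    linarith
  have h8 := mul_le_mul_of_nonneg_left h7 hr.1.le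
  refine le_of_mul_le_mul_left ?_ h1r
  linarith

/-- A discrete Hardy inequality for partial sums. -/
lemma sum_rpow_partial_sum_le {r q : ℝ} (hr : r ∈ Set.Ioo (0 : ℝ) 1) (hq : 1 ≤ q)
    {e : ℕ → ℝ} (he : ∀ j, 0 ≤ e j) (J : ℕ) :
    ∑ j ∈ Finset.range J, (r ^ j * ∑ i ∈ Finset.range (j + 1), e i) ^ q ≤
      (1 - r) ^ (-q) * ∑ j ∈ Finset.range J, (r ^ j * e j) ^ q := by
  have h1r : 0 < 1 - r := by linarith [hr.2]
  set C := (1 - r) ^ (-q)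
  set x : ℕ → ℝ := fun j ↦ r ^ j * ∑ i ∈ Finset.range (j + 1), e i with hxdef
  have hr0 := hr.1
  have hx (j) : 0 ≤ x j := mul_nonneg (by positivity) (Finset.sum_nonneg fun i _ ↦ he i)
  have hy (j) : 0 ≤ r ^ j * e j := mul_nonneg (by positivity) (he j)
  have hC : 1 ≤ (1 - r) * C := one_le_one_sub_rpow_neg hr hq
  have h1 (j) : x (j + 1) ^ q ≤ r * x j ^ q + (1 - r) * (C * (r ^ (j + 1) * e (j + 1)) ^ q) := by
    have : x (j + 1) = r * x j + r ^ (j + 1) * e (j + 1) := by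
      simp only [hxdef]
      rw [Finset.sum_range_succ]
      ring
    rw [this]
    exact rpow_weighted_add_le hr hq (hx j) (hy _)
  have h2 : ∑ j ∈ Finset.range J, x j ^ q ≤
      r * ∑ j ∈ Finset.range J, x j ^ q +
        (1 - r) * (C * ∑ j ∈ Finset.range J, (r ^ j * e j) ^ q) := by
    cases J with
    | zero => simp
    | succ J =>
      rw [Finset.sum_range_succ']
      have h3 := Finset.sum_le_sum fun j (_ : j ∈ Finset.range J) ↦ h1 j
      rw [Finset.sum_add_distrib, ← Finset.mul_sum, ← Finset.mul_sum, ← Finset.mul_sum] at h3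
      rw [Finset.sum_range_succ' (fun j ↦ (r ^ j * e j) ^ q)]
      have h4 : x 0 = r ^ 0 * e 0 := by simp [hxdef]
      have h5 : 0 ≤ x 0 ^ q := Real.rpow_nonneg (hx 0) q
      have h6 : x 0 ^ q ≤ (1 - r) * C * x 0 ^ q := le_mul_of_one_le_left h5 hC
      have h7 : ∑ j ∈ Finset.range J, x j ^ q ≤
          ∑ j ∈ Finset.range J, x (j + 1) ^ q + x 0 ^ q := by
        rw [← Finset.sum_range_succ' (fun j ↦ x j ^ q)]
        exact Finset.sum_le_sum_of_subset_of_nonneg (Finset.range_subset_range.2 J.le_succ)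
          fun j _ _ ↦ Real.rpow_nonneg (hx j) q
      have h8 := mul_le_mul_of_nonneg_left h7 hr0.le
      rw [← h4]
      linarith
  refine le_of_mul_le_mul_left ?_ h1r
  linarith

lemma rpow_add_le_two_rpow_mul {q x y : ℝ} (hq : 1 ≤ q) (hx : 0 ≤ x) (hy : 0 ≤ y) :
    (x + y) ^ q ≤ 2 ^ q * (x ^ q + y ^ q) := by
  have h := rpow_midpoint_le hq hx hy
  have h2 : x + y = 2 * ((x + y) / 2) := by ring
  rw [h2, Real.mul_rpow zero_le_two (by positivity)]
  gcongr
  have : 0 ≤ x ^ q + y ^ q := by positivity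
  linarith

/-- Dyadic decomposition of a weighted sum. -/
lemma sum_Icc_rpow_mul_le {q ρ : ℝ} (hρ : ρ = (2 : ℝ) ^ (-(1 / 2) : ℝ)) (hq : 0 ≤ q) {R : ℕ}
    {d D : ℕ → ℝ} (hd : ∀ k, 0 ≤ d k) (hD : ∀ j, 0 ≤ D j)
    (h : ∀ k ∈ Finset.Icc 1 R, d k ≤ D (Nat.log 2 k)) :
    ∑ k ∈ Finset.Icc 1 R, (k : ℝ) ^ (-1 - q / 2) * d k ^ q ≤
      ∑ j ∈ Finset.range (Nat.log 2 R + 1), (ρ ^ j * D j) ^ q := by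
  have hmaps : ∀ k ∈ Finset.Icc 1 R, Nat.log 2 k ∈ Finset.range (Nat.log 2 R + 1) := by
    intro k hk
    exact Finset.mem_range.2 (Nat.lt_succ_of_le (Nat.log_mono_right (Finset.mem_Icc.1 hk).2))
  rw [← Finset.sum_fiberwise_of_maps_to hmaps]
  refine Finset.sum_le_sum fun j _ ↦ ?_
  have hρj : ((2 : ℝ) ^ j) ^ (-q / 2) = (ρ ^ j) ^ q := by
    rw [hρ, ← Real.rpow_natCast, ← Real.rpow_natCast, ← Real.rpow_mul zero_le_two,
      ← Real.rpow_mul zero_le_two, ← Real.rpow_mul zero_le_two]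
    congr 1
    ring
  have hterm : ∀ k ∈ ({k ∈ Finset.Icc 1 R | Nat.log 2 k = j} : Finset ℕ),
      (k : ℝ) ^ (-1 - q / 2) * d k ^ q ≤ ((2 : ℝ) ^ j)⁻¹ * (ρ ^ j * D j) ^ q := by
    intro k hk
    obtain ⟨hkR, rfl⟩ := Finset.mem_filter.1 hk
    have hk0 : k ≠ 0 := by have := (Finset.mem_Icc.1 hkR).1; lia
    have hρ0 : 0 < ρ := by rw [hρ]; positivity
    have h2 : (2 : ℝ) ^ Nat.log 2 k ≤ k := by exact_mod_cast Nat.pow_log_le_self 2 hk0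
    rw [Real.mul_rpow (by positivity) (hD _), ← mul_assoc, ← hρj]
    have h3 : (k : ℝ) ^ (-1 - q / 2) ≤
        ((2 : ℝ) ^ Nat.log 2 k)⁻¹ * ((2 : ℝ) ^ Nat.log 2 k) ^ (-q / 2) := by
      rw [← Real.rpow_neg_one, ← Real.rpow_add (by positivity), ← 
        show (-1 : ℝ) + -q / 2 = -1 - q / 2 by ring]
      exact Real.rpow_le_rpow_of_nonpos (by positivity) h2 (by linarith)
    have h4 := Real.rpow_le_rpow (hd k) (h k hkR) hq
    exact mul_le_mul h3 h4 (Real.rpow_nonneg (hd k) q) (by positivity)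
  have hcard : (Finset.card {k ∈ Finset.Icc 1 R | Nat.log 2 k = j} : ℝ) ≤ 2 ^ j := by
    have hsub : ({k ∈ Finset.Icc 1 R | Nat.log 2 k = j} : Finset ℕ) ⊆
        Finset.Ico (2 ^ j) (2 ^ (j + 1)) := by
      intro k hk
      obtain ⟨hkR, rfl⟩ := Finset.mem_filter.1 hk
      have hk0 : k ≠ 0 := by have := (Finset.mem_Icc.1 hkR).1; lia
      exact Finset.mem_Ico.2 ⟨Nat.pow_log_le_self 2 hk0, Nat.lt_pow_succ_log_self one_lt_two k⟩
    have := Finset.card_le_card hsub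
    rw [Nat.card_Ico, pow_succ] at this
    have h2 : Finset.card {k ∈ Finset.Icc 1 R | Nat.log 2 k = j} ≤ 2 ^ j := by lia
    exact_mod_cast h2
  refine (Finset.sum_le_card_nsmul _ _ _ hterm).trans ?_
  rw [nsmul_eq_mul]
  have hρ0 : 0 < ρ := by rw [hρ]; positivity
  have hnn : 0 ≤ (ρ ^ j * D j) ^ q := Real.rpow_nonneg (mul_nonneg (by positivity) (hD j)) q
  calc _ ≤ (2 : ℝ) ^ j * (((2 : ℝ) ^ j)⁻¹ * (ρ ^ j * D j) ^ q) := by gcongr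
    _ = _ := by rw [mul_inv_cancel_left₀ (by positivity)]

namespace DH

/-- `h` is a product of at most `L` elements of `{a, b, a⁻¹, b⁻¹}`. -/
def IsWord (L : ℕ) (h : DH) : Prop :=
  ∃ l : List DH, l.length ≤ L ∧ (∀ s ∈ l, s ∈ ({gA, gB, gA⁻¹, gB⁻¹} : Set DH)) ∧ l.prod = h

lemma IsWord.mono {L L' : ℕ} {h : DH} (hw : IsWord L h) (hL : L ≤ L') : IsWord L' h :=
  let ⟨l, h1, h2, h3⟩ := hw
  ⟨l, h1.trans hL, h2, h3⟩

lemma IsWord.one : IsWord 0 1 := ⟨[], by simp⟩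

lemma IsWord.of_mem {s : DH} (hs : s ∈ ({gA, gB, gA⁻¹, gB⁻¹} : Set DH)) : IsWord 1 s :=
  ⟨[s], by simp, by simpa using hs, by simp⟩

lemma IsWord.mul {L L' : ℕ} {h h' : DH} (hw : IsWord L h) (hw' : IsWord L' h') :
    IsWord (L + L') (h * h') := by
  obtain ⟨l, h1, h2, rfl⟩ := hw
  obtain ⟨l', h1', h2', rfl⟩ := hw'
  refine ⟨l ++ l', by simp; lia, fun s hs ↦ ?_, by simp⟩
  exact (List.mem_append.1 hs).elim (h2 s) (h2' s)

lemma IsWord.inv {L : ℕ} {h : DH} (hw : IsWord L h) : IsWord L h⁻¹ := by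
  obtain ⟨l, h1, h2, rfl⟩ := hw
  refine ⟨(l.map (·⁻¹)).reverse, by simpa using h1, fun s hs ↦ ?_, by rw [List.prod_inv_reverse]⟩
  simp only [List.mem_reverse, List.mem_map] at hs
  obtain ⟨t, ht, rfl⟩ := hs
  rcases h2 t ht with rfl | rfl | rfl | rfl <;> simp

lemma IsWord.pow {L : ℕ} {h : DH} (hw : IsWord L h) (k : ℕ) : IsWord (k * L) (h ^ k) := by
  induction k with
  | zero => simpa using IsWord.one
  | succ k ih =>
    rw [pow_succ, Nat.succ_mul]
    exact ih.mul hw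

lemma isWord_gA : IsWord 1 gA := .of_mem (by simp)

lemma isWord_gB : IsWord 1 gB := .of_mem (by simp)

lemma isWord_gA_pow (k : ℕ) : IsWord k (gA ^ k) := by simpa using isWord_gA.pow k

lemma isWord_gB_pow (k : ℕ) : IsWord k (gB ^ k) := by simpa using isWord_gB.pow k

lemma gA_pow (k : ℕ) : gA ^ k = ⟨k, 0, 0⟩ := by
  induction k with
  | zero => simp [one_def]
  | succ k ih => rw [pow_succ, ih]; simp [mul_def, gA]

lemma gB_pow (k : ℕ) : gB ^ k = ⟨0, k, 0⟩ := by
  induction k with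
  | zero => simp [one_def]
  | succ k ih => rw [pow_succ, ih]; simp [mul_def, gB]

lemma gC_eq : gC = ⟨0, 0, 1⟩ := by
  simp [gC, gA, gB, mul_def, inv_def]

lemma gC_pow (k : ℕ) : gC ^ k = ⟨0, 0, k⟩ := by
  induction k with
  | zero => simp [one_def]
  | succ k ih => rw [pow_succ, ih]; simp [mul_def, gC_eq]

lemma gC_pow_comm (k : ℕ) (h : DH) : gC ^ k * h = h * gC ^ k := by
  rw [gC_pow]
  simp [mul_def, add_comm]

lemma gC_pow_mul_eq (i j : ℕ) :
    gC ^ (i * j) = gA ^ i * gB ^ j * (gA ^ i)⁻¹ * (gB ^ j)⁻¹ := by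
  simp [gC_pow, gA_pow, gB_pow, mul_def, inv_def]

lemma isWord_gC_pow_mul (i j : ℕ) : IsWord (2 * (i + j)) (gC ^ (i * j)) := by
  rw [gC_pow_mul_eq]
  exact ((((isWord_gA_pow i).mul (isWord_gB_pow j)).mul (isWord_gA_pow i).inv).mul
    (isWord_gB_pow j).inv).mono (by lia)

lemma isWord_gC_pow {M n k : ℕ} (hn : 0 < n) (hk : k ≤ M * n ^ 2) :
    IsWord ((2 * M + 4) * n) (gC ^ k) := by
  have h1 : k / n ≤ M * n := by
    rw [Nat.div_le_iff_le_mul_add_pred hn]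
    nlinarith
  have h2 : k % n + 1 ≤ n := Nat.mod_lt k hn
  have h3 := (isWord_gC_pow_mul n (k / n)).mul (isWord_gC_pow_mul (k % n) 1)
  rw [← pow_add, mul_one, Nat.div_add_mod] at h3
  exact h3.mono (by nlinarith)

lemma exists_isWord (h : DH) : ∃ L, IsWord L h := by
  have hz : ∀ (s : DH), (∃ L, IsWord L s) → ∀ k : ℤ, ∃ L, IsWord L (s ^ k) := by
    rintro s ⟨L, hs⟩ k
    obtain ⟨m, rfl | rfl⟩ := k.eq_nat_or_neg
    · exact ⟨_, by simpa using hs.pow m⟩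
    · exact ⟨_, by simpa using (hs.pow m).inv⟩
  have hzC (k : ℤ) : gC ^ k = ⟨0, 0, k⟩ := by
    obtain ⟨m, rfl | rfl⟩ := k.eq_nat_or_neg <;> simp [gC_pow, inv_def]
  have hzA (k : ℤ) : gA ^ k = ⟨k, 0, 0⟩ := by
    obtain ⟨m, rfl | rfl⟩ := k.eq_nat_or_neg <;> simp [gA_pow, inv_def]
  have hzB (k : ℤ) : gB ^ k = ⟨0, k, 0⟩ := by
    obtain ⟨m, rfl | rfl⟩ := k.eq_nat_or_neg <;> simp [gB_pow, inv_def]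
  obtain ⟨L₁, h₁⟩ := hz gB ⟨_, isWord_gB⟩ h.y
  obtain ⟨L₂, h₂⟩ := hz gA ⟨_, isWord_gA⟩ h.x
  obtain ⟨L₃, h₃⟩ := hz gC ⟨_, by simpa using isWord_gC_pow_mul 1 1⟩ h.z
  have heq : gB ^ h.y * gA ^ h.x * gC ^ h.z = h := by
    rw [hzA, hzB, hzC]
    ext <;> simp [mul_def]
  exact ⟨_, heq ▸ (h₁.mul h₂).mul h₃⟩

lemma mem_Ball_iff {n : ℕ} {h : DH} : h ∈ Ball n ↔ IsWord n h := by
  have hmem : h ∈ Ball n ↔ wordLen h⁻¹ ≤ n := by simp [Ball, dW]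
  rw [hmem]
  constructor
  · intro hn
    obtain ⟨L, l, -, h2, h3⟩ := exists_isWord h⁻¹
    obtain ⟨l', h1', h2', h3'⟩ := Nat.sInf_mem
      (s := {n | ∃ l : List DH, l.length = n ∧
        (∀ s ∈ l, s ∈ ({gA, gB, gA⁻¹, gB⁻¹} : Set DH)) ∧ l.prod = h⁻¹}) ⟨_, l, rfl, h2, h3⟩
    have hw : IsWord n h⁻¹ := ⟨l', h1'.le.trans hn, h2', h3'⟩
    simpa using hw.inv
  · intro hw
    obtain ⟨l, h1, h2, h3⟩ := hw.inv
    have hle : wordLen h⁻¹ ≤ l.length := Nat.sInf_le ⟨l, rfl, h2, h3⟩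
    exact hle.trans h1

lemma finite_Ball (n : ℕ) : (Ball n).Finite := by
  induction n with
  | zero =>
    refine (Set.finite_singleton (1 : DH)).subset fun h hh ↦ ?_
    obtain ⟨l, h1, -, rfl⟩ := mem_Ball_iff.1 hh
    rw [List.length_eq_zero_iff.1 (Nat.le_zero.1 h1)]
    simp
  | succ n ih =>
    have hS : ({gA, gB, gA⁻¹, gB⁻¹} : Set DH).Finite := Set.toFinite _
    refine ((hS.image2 (· * ·) ih).union ih).subset fun h hh ↦ ?_
    obtain ⟨l, h1, h2, rfl⟩ := mem_Ball_iff.1 hh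
    cases l with
    | nil => exact Or.inr (mem_Ball_iff.2 (IsWord.one.mono n.zero_le))
    | cons s l =>
      refine Or.inl ⟨s, h2 s (by simp), l.prod, mem_Ball_iff.2 ⟨l, by simpa using h1, ?_, rfl⟩,
        by simp⟩
      exact fun t ht ↦ h2 t (List.mem_cons_of_mem _ ht)

/-- The ball of radius `r` saturated along `c, …, c ^ m`. -/
noncomputable def zone (r m : ℕ) : Finset DH :=
  ((finite_Ball r).image2 (fun x i ↦ x * gC ^ i) (Set.finite_Iic m)).toFinset

lemma mem_zone {r m : ℕ} {x : DH} : x ∈ zone r m ↔ ∃ y, IsWord r y ∧ ∃ i ≤ m, y * gC ^ i = x := by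
  simp [zone, mem_Ball_iff]

lemma zone_mono {r r' m m' : ℕ} (hr : r ≤ r') (hm : m ≤ m') : zone r m ⊆ zone r' m' := by
  intro x hx
  obtain ⟨y, hy, i, hi, rfl⟩ := mem_zone.1 hx
  exact mem_zone.2 ⟨y, hy.mono hr, i, hi.trans hm, rfl⟩

lemma mul_gC_pow_mem_zone {r m k : ℕ} {x : DH} (hx : x ∈ zone r m) :
    x * gC ^ k ∈ zone r (m + k) := by
  obtain ⟨y, hy, i, hi, rfl⟩ := mem_zone.1 hx
  exact mem_zone.2 ⟨y, hy, i + k, by lia, by rw [pow_add, mul_assoc]⟩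

lemma mul_mem_zone {r m L : ℕ} {x h : DH} (hx : x ∈ zone r m) (hh : IsWord L h) :
    x * h ∈ zone (r + L) m := by
  obtain ⟨y, hy, i, hi, rfl⟩ := mem_zone.1 hx
  exact mem_zone.2 ⟨y * h, hy.mul hh, i, hi, by rw [mul_assoc, mul_assoc, gC_pow_comm]⟩

lemma zone_zero (n : ℕ) : zone n 0 = (finite_Ball n).toFinset := by
  ext x
  simp [mem_zone, mem_Ball_iff]

lemma zone_subset_Ball {r M n : ℕ} (hn : 0 < n) :
    zone r (M * n ^ 2) ⊆ (finite_Ball (r + (2 * M + 4) * n)).toFinset := by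
  intro x hx
  obtain ⟨y, hy, i, hi, rfl⟩ := mem_zone.1 hx
  simpa [mem_Ball_iff] using hy.mul (isWord_gC_pow hn hi)

section Operators

variable {X : Type} [NormedAddCommGroup X] [NormedSpace ℝ X]

/-- The `ℓ_p`-norm of the restriction of a function to a finite set. -/
noncomputable def lpSeminorm {p : ℝ} (hp : 1 ≤ p) (s : Finset DH) : Seminorm ℝ (DH → X) :=
  Seminorm.of (fun g ↦ (∑ x ∈ s, ‖g x‖ ^ p) ^ (1 / p))
    (fun g g' ↦ by
      refine le_trans ?_ (Real.Lp_add_le_of_nonneg s hp (fun x _ ↦ norm_nonneg (g x))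
        (fun x _ ↦ norm_nonneg (g' x)))
      gcongr
      exact norm_add_le _ _)
    (fun c g ↦ by
      have h0 : 0 ≤ ∑ x ∈ s, ‖g x‖ ^ p := Finset.sum_nonneg fun x _ ↦ by positivity
      simp only [Pi.smul_apply, norm_smul, Real.mul_rpow (norm_nonneg _) (norm_nonneg _)]
      rw [← Finset.mul_sum, Real.mul_rpow (by positivity) h0, ← Real.rpow_mul (norm_nonneg _),
        mul_one_div_cancel (by linarith), Real.rpow_one])

variable {p : ℝ} (hp : 1 ≤ p)

lemma lpSeminorm_apply (s : Finset DH) (g : DH → X) :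
    lpSeminorm hp s g = (∑ x ∈ s, ‖g x‖ ^ p) ^ (1 / p) := rfl

lemma lpSeminorm_rpow (s : Finset DH) (g : DH → X) (q : ℝ) :
    lpSeminorm hp s g ^ q = (∑ x ∈ s, ‖g x‖ ^ p) ^ (q / p) := by
  rw [lpSeminorm_apply, ← Real.rpow_mul (Finset.sum_nonneg fun x _ ↦ by positivity),
    one_div_mul_eq_div]

lemma lpSeminorm_mono {s s' : Finset DH} (h : s ⊆ s') (g : DH → X) :
    lpSeminorm hp s g ≤ lpSeminorm hp s' g := by
  simp only [lpSeminorm_apply]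
  have := Finset.sum_le_sum_of_subset_of_nonneg (f := fun x ↦ ‖g x‖ ^ p) h
    (fun x _ _ ↦ by positivity)
  have h0 : 0 ≤ ∑ x ∈ s, ‖g x‖ ^ p := Finset.sum_nonneg fun x _ ↦ by positivity
  gcongr

/-- Right translation of functions on the Heisenberg group. -/
def shift : DH →* Module.End ℝ (DH → X) where
  toFun h := LinearMap.funLeft ℝ X (· * h)
  map_one' := by ext g x; simp [LinearMap.funLeft_apply]
  map_mul' h h' := by ext g x; simp [LinearMap.funLeft_apply, mul_assoc]

lemma shift_apply (h : DH) (g : DH → X) (x : DH) : shift h g x = g (x * h) := rfl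

/-- Right difference of functions on the Heisenberg group. -/
def diff (h : DH) : Module.End ℝ (DH → X) := shift h - 1

lemma diff_apply (h : DH) (g : DH → X) : diff h g = shift h g - g := rfl

lemma lpSeminorm_shift_le {s s' : Finset DH} {h : DH} (hs : ∀ x ∈ s, x * h ∈ s') (g : DH → X) :
    lpSeminorm hp s (shift h g) ≤ lpSeminorm hp s' g := by
  classical
  refine le_trans (le_of_eq ?_)
    (lpSeminorm_mono hp (Finset.image_subset_iff.2 hs : s.image (· * h) ⊆ s') g)
  simp only [lpSeminorm_apply, shift_apply]
  rw [Finset.sum_image fun x _ y _ hxy ↦ mul_right_cancel hxy]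

lemma lpSeminorm_zone_mono {r r' m m' : ℕ} (hr : r ≤ r') (hm : m ≤ m') (g : DH → X) :
    lpSeminorm hp (zone r m) g ≤ lpSeminorm hp (zone r' m') g :=
  lpSeminorm_mono hp (zone_mono hr hm) g

lemma lpSeminorm_zone_shift_gC_pow_le (r m k : ℕ) (g : DH → X) :
    lpSeminorm hp (zone r m) (shift (gC ^ k) g) ≤ lpSeminorm hp (zone r (m + k)) g :=
  lpSeminorm_shift_le hp (fun _ hx ↦ mul_gC_pow_mem_zone hx) g

lemma lpSeminorm_zone_shift_le {L : ℕ} {h : DH} (hh : IsWord L h) (r m : ℕ) (g : DH → X) :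
    lpSeminorm hp (zone r m) (shift h g) ≤ lpSeminorm hp (zone (r + L) m) g :=
  lpSeminorm_shift_le hp (fun _ hx ↦ mul_mem_zone hx hh) g

/-- The sum of the norms of the two horizontal differences of a function. -/
noncomputable def horizontal (s : Finset DH) (g : DH → X) : ℝ :=
  lpSeminorm hp s (diff gA g) + lpSeminorm hp s (diff gB g)

lemma horizontal_zone_mono {r r' m m' : ℕ} (hr : r ≤ r') (hm : m ≤ m') (g : DH → X) :
    horizontal hp (zone r m) g ≤ horizontal hp (zone r' m') g :=
  add_le_add (lpSeminorm_zone_mono hp hr hm _) (lpSeminorm_zone_mono hp hr hm _)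

lemma horizontal_nonneg (s : Finset DH) (g : DH → X) : 0 ≤ horizontal hp s g :=
  add_nonneg (apply_nonneg _ _) (apply_nonneg _ _)

lemma lpSeminorm_zone_diff_inv_le {s : DH} (hs : IsWord 1 s) (r m : ℕ) (g : DH → X) :
    lpSeminorm hp (zone r m) (diff s⁻¹ g) ≤
      lpSeminorm hp (zone (r + 1) m) (diff s g) := by
  have h : diff s⁻¹ g = -shift s⁻¹ (diff s g) := by
    ext x
    simp [diff_apply, shift_apply]
  rw [h, map_neg_eq_map]
  exact lpSeminorm_zone_shift_le hp hs.inv r m _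

lemma lpSeminorm_zone_diff_gen_le {s : DH} (hs : s ∈ ({gA, gB, gA⁻¹, gB⁻¹} : Set DH)) (r m : ℕ)
    (g : DH → X) :
    lpSeminorm hp (zone r m) (diff s g) ≤ horizontal hp (zone (r + 1) m) g := by
  have hA : lpSeminorm hp (zone (r + 1) m) (diff gA g) ≤ horizontal hp (zone (r + 1) m) g :=
    le_add_of_nonneg_right (apply_nonneg _ _)
  have hB : lpSeminorm hp (zone (r + 1) m) (diff gB g) ≤ horizontal hp (zone (r + 1) m) g :=
    le_add_of_nonneg_left (apply_nonneg _ _)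
  rcases hs with rfl | rfl | rfl | rfl
  · exact (lpSeminorm_zone_mono hp r.le_succ le_rfl _).trans hA
  · exact (lpSeminorm_zone_mono hp r.le_succ le_rfl _).trans hB
  · exact (lpSeminorm_zone_diff_inv_le hp isWord_gA r m g).trans hA
  · exact (lpSeminorm_zone_diff_inv_le hp isWord_gB r m g).trans hB

lemma lpSeminorm_zone_diff_word_le {L : ℕ} {h : DH} (hh : IsWord L h) (r m : ℕ) (g : DH → X) :
    lpSeminorm hp (zone r m) (diff h g) ≤ L * horizontal hp (zone (r + L) m) g := by
  induction L generalizing r h with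
  | zero =>
    obtain ⟨l, h1, -, rfl⟩ := hh
    rw [List.length_eq_zero_iff.1 (Nat.le_zero.1 h1)]
    simp [diff]
  | succ L ih =>
    obtain ⟨l, h1, h2, rfl⟩ := hh
    have hnn := horizontal_nonneg hp (zone (r + (L + 1)) m) g
    cases l with
    | nil => simpa [diff] using by positivity
    | cons s l =>
      have hs := h2 s (by simp)
      have hl : IsWord L l.prod :=
        ⟨l, by simpa using h1, fun t ht ↦ h2 t (List.mem_cons_of_mem _ ht), rfl⟩
      have hsplit : diff (s :: l).prod g =
          shift s (diff l.prod g) + diff s g := by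
        simp [diff_apply, map_mul]
      rw [hsplit]
      refine (map_add_le_add _ _ _).trans ?_
      have e1 := (lpSeminorm_zone_shift_le hp (.of_mem hs) r m (diff l.prod g)).trans
        (ih hl (r + 1))
      rw [add_assoc, add_comm 1 L] at e1
      have e2 := (lpSeminorm_zone_diff_gen_le hp hs r m g).trans
        (horizontal_zone_mono hp (by lia : r + 1 ≤ r + (L + 1)) le_rfl g)
      push_cast
      linarith

/-- The average of the translations by `1, c, …, c ^ (2 ^ j - 1)`. -/
noncomputable def average : ℕ → Module.End ℝ (DH → X)
  | 0 => 1
  | j + 1 => (1 / 2 : ℝ) • ((1 + shift (gC ^ 2 ^ j)) * average j)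

/-- The difference of two consecutive dyadic averages of step `2 ^ j`. -/
noncomputable def averageDiff (j : ℕ) : Module.End ℝ (DH → X) :=
  diff (gC ^ 2 ^ j) * average j

lemma commute_shift_gC_pow (k : ℕ) (h : DH) :
    Commute (shift (X := X) (gC ^ k)) (shift h) := by
  rw [commute_iff_eq, ← map_mul, ← map_mul, gC_pow_comm]

lemma commute_average_shift (j : ℕ) (h : DH) :
    Commute (average (X := X) j) (shift h) := by
  induction j with
  | zero => exact Commute.one_left _
  | succ j ih =>
    exact Commute.smul_left ((((Commute.one_left _).add_left (commute_shift_gC_pow _ h))).mul_left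
      ih) _

lemma commute_averageDiff_shift (j : ℕ) (h : DH) :
    Commute (averageDiff (X := X) j) (shift h) :=
  (commute_shift_gC_pow _ h |>.sub_left (Commute.one_left _)).mul_left (commute_average_shift j h)

lemma commute_averageDiff_diff (j : ℕ) (h : DH) :
    Commute (averageDiff (X := X) j) (diff h) :=
  (commute_averageDiff_shift j h).sub_right (Commute.one_right _)

lemma average_apply_diff (j : ℕ) (h : DH) (g : DH → X) :
    average j (diff h g) = diff h (average j g) :=
  LinearMap.congr_fun ((commute_average_shift j h).sub_right (Commute.one_right _)).eq g

lemma averageDiff_apply_diff (j : ℕ) (h : DH) (g : DH → X) :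
    averageDiff j (diff h g) = diff h (averageDiff j g) :=
  LinearMap.congr_fun (commute_averageDiff_diff j h).eq g

lemma shift_gC_pow_two_pow_succ (j : ℕ) :
    shift (X := X) (gC ^ 2 ^ (j + 1)) = shift (gC ^ 2 ^ j) * shift (gC ^ 2 ^ j) := by
  rw [← map_mul, ← pow_add, pow_succ, mul_two]

lemma averageDiff_recursion (j : ℕ) :
    averageDiff (X := X) j = (1 / 2 : ℝ) • averageDiff (j + 1) -
      ((1 / 4 : ℝ) • (shift (gC ^ 2 ^ j) * (diff (gC ^ 2 ^ j) * averageDiff j)) +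
        (3 / 4 : ℝ) • (diff (gC ^ 2 ^ j) * averageDiff j)) := by
  simp only [averageDiff, average, diff, shift_gC_pow_two_pow_succ]
  set T := shift (X := X) (gC ^ 2 ^ j)
  simp only [mul_smul_comm, sub_mul, mul_sub, add_mul, mul_add, one_mul, mul_assoc]
  module

lemma one_sub_average (j : ℕ) :
    1 - average (X := X) j = (-1 / 2 : ℝ) • ∑ i ∈ Finset.range j, averageDiff i := by
  induction j with
  | zero => simp [average]
  | succ j ih =>
    rw [Finset.sum_range_succ, smul_add, ← ih]
    simp only [averageDiff, average, diff, sub_mul, add_mul, one_mul]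
    module

lemma lpSeminorm_zone_average_le (r m j : ℕ) (g : DH → X) :
    lpSeminorm hp (zone r m) (average j g) ≤ lpSeminorm hp (zone r (m + 2 ^ j)) g := by
  induction j generalizing m with
  | zero => exact lpSeminorm_zone_mono hp le_rfl (by lia) g
  | succ j ih =>
    have h : average (j + 1) g =
        (1 / 2 : ℝ) • (average j g + shift (gC ^ 2 ^ j) (average j g)) := by
      simp [average]
    have h1 := (ih m).trans (lpSeminorm_zone_mono hp (le_refl r)
      (by rw [pow_succ]; lia : m + 2 ^ j ≤ m + 2 ^ (j + 1)) g)
    have h2 := (lpSeminorm_zone_shift_gC_pow_le hp r m (2 ^ j) (average j g)).trans (ih (m + 2 ^ j))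
    rw [add_assoc, ← mul_two, ← pow_succ] at h2
    rw [h, map_smul_eq_mul]
    have h3 := map_add_le_add (lpSeminorm hp (zone r m)) (average j g)
      (shift (gC ^ 2 ^ j) (average j g))
    rw [Real.norm_of_nonneg (by norm_num)]
    linarith

lemma averageDiff_succ_gap {κ q : ℝ} (hp1 : 1 < p)
    (hκ : ∀ (s : Finset DH) (u v : DH → X) (P : ℝ), ∑ i ∈ s, ‖u i‖ ^ p ≤ P →
        ∑ i ∈ s, ‖v i‖ ^ p ≤ P →
          (∑ i ∈ s, ‖(1 / 2 : ℝ) • (u i + v i)‖ ^ p) ^ (q / p) +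
            κ * (∑ i ∈ s, ‖u i - v i‖ ^ p) ^ (q / p) ≤ P ^ (q / p))
    (r m j : ℕ) (g : DH → X) :
    lpSeminorm hp1.le (zone r m) (average (j + 1) g) ^ q +
      κ * lpSeminorm hp1.le (zone r m) (averageDiff j g) ^ q ≤
        lpSeminorm hp1.le (zone r (m + 2 ^ j)) (average j g) ^ q := by
  have hp0 : 0 < p := by linarith
  set N := lpSeminorm (X := X) hp1.le (zone r m) with hN
  set N' := lpSeminorm (X := X) hp1.le (zone r (m + 2 ^ j)) with hN'
  have hle (u : DH → X) (hu : N u ≤ N' (average j g)) :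
      ∑ x ∈ zone r m, ‖u x‖ ^ p ≤ N' (average j g) ^ p := by
    have h := Real.rpow_le_rpow (apply_nonneg _ _) hu hp0.le
    rwa [hN, lpSeminorm_rpow, div_self hp0.ne', Real.rpow_one] at h
  have h1 := hle _ (lpSeminorm_zone_shift_gC_pow_le hp1.le r m (2 ^ j) (average j g))
  have h2 := hle _ (lpSeminorm_zone_mono hp1.le (le_refl r) (Nat.le_add_right m (2 ^ j))
    (average j g))
  have h := hκ (zone r m) _ _ _ h1 h2
  rw [← Real.rpow_mul (apply_nonneg N' _), mul_div_cancel₀ _ hp0.ne'] at h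
  have e1 (x : DH) : average (j + 1) g x =
      (1 / 2 : ℝ) • (shift (gC ^ 2 ^ j) (average j g) x + average j g x) := by
    rw [add_comm (shift (gC ^ 2 ^ j) (average j g) x)]
    rfl
  have e2 (x : DH) : averageDiff j g x = shift (gC ^ 2 ^ j) (average j g) x - average j g x := rfl
  simp only [hN, lpSeminorm_rpow, e1, e2]
  exact h

lemma sum_averageDiff_le {κ q : ℝ} (hp1 : 1 < p) (hq : 0 ≤ q)
    (hκ : ∀ (s : Finset DH) (u v : DH → X) (P : ℝ), ∑ i ∈ s, ‖u i‖ ^ p ≤ P →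
        ∑ i ∈ s, ‖v i‖ ^ p ≤ P →
          (∑ i ∈ s, ‖(1 / 2 : ℝ) • (u i + v i)‖ ^ p) ^ (q / p) +
            κ * (∑ i ∈ s, ‖u i - v i‖ ^ p) ^ (q / p) ≤ P ^ (q / p)) (hκ0 : 0 ≤ κ)
    (r m j : ℕ) (g : DH → X) :
    lpSeminorm hp1.le (zone r m) (average j g) ^ q +
      κ * ∑ i ∈ Finset.range j, lpSeminorm hp1.le (zone r m) (averageDiff i g) ^ q ≤
        lpSeminorm hp1.le (zone r (m + 2 ^ j)) g ^ q := by
  induction j generalizing m with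
  | zero =>
    simp only [Finset.range_zero, Finset.sum_empty, mul_zero, add_zero]
    exact Real.rpow_le_rpow (apply_nonneg _ _)
      (lpSeminorm_zone_mono _ le_rfl (by lia) _) hq
  | succ j ih =>
    have h1 := ih (m + 2 ^ j)
    rw [add_assoc, ← mul_two, ← pow_succ] at h1
    have h2 := averageDiff_succ_gap hp1 hκ r m j g
    have h3 : ∑ i ∈ Finset.range j, lpSeminorm hp1.le (zone r m) (averageDiff i g) ^ q ≤
        ∑ i ∈ Finset.range j, lpSeminorm hp1.le (zone r (m + 2 ^ j)) (averageDiff i g) ^ q :=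
      Finset.sum_le_sum fun i _ ↦ Real.rpow_le_rpow (apply_nonneg _ _)
        (lpSeminorm_zone_mono _ le_rfl (by lia) _) hq
    rw [Finset.sum_range_succ, mul_add]
    linarith [mul_le_mul_of_nonneg_left h3 hκ0]

lemma lpSeminorm_averageDiff_le (r m j : ℕ) (g : DH → X) :
    lpSeminorm hp (zone r m) (averageDiff j g) ≤
      1 / 2 * lpSeminorm hp (zone r m) (averageDiff (j + 1) g) +
        lpSeminorm hp (zone r (m + 2 ^ j)) (diff (gC ^ 2 ^ j) (averageDiff j g)) := by
  set w := diff (gC ^ 2 ^ j) (averageDiff j g) with hw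
  have h : averageDiff j g = (1 / 2 : ℝ) • averageDiff (j + 1) g -
      ((1 / 4 : ℝ) • shift (gC ^ 2 ^ j) w + (3 / 4 : ℝ) • w) := by
    conv_lhs => rw [averageDiff_recursion j]
    rfl
  rw [h]
  refine (map_sub_le_add _ _ _).trans ?_
  have h1 := map_add_le_add (lpSeminorm hp (zone r m)) ((1 / 4 : ℝ) • shift (gC ^ 2 ^ j) w)
    ((3 / 4 : ℝ) • w)
  have h2 := lpSeminorm_zone_shift_gC_pow_le hp r m (2 ^ j) w
  have h3 := lpSeminorm_zone_mono hp (le_refl r) (by lia : m ≤ m + 2 ^ j) w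
  simp only [map_smul_eq_mul] at h1 ⊢
  rw [Real.norm_of_nonneg (by norm_num), Real.norm_of_nonneg (by norm_num)] at h1
  rw [Real.norm_of_nonneg (by norm_num)]
  linarith

/-- A dyadic vertical difference is controlled by the differences of dyadic averages. -/
lemma lpSeminorm_diff_two_pow_le {r m R i : ℕ} (hm : m + 2 ^ i ≤ R) (g : DH → X) :
    lpSeminorm hp (zone r m) (diff (gC ^ 2 ^ i) g) ≤
      ∑ l ∈ Finset.range (i + 1), lpSeminorm hp (zone r R) (averageDiff l g) := by
  have hsplit : diff (gC ^ 2 ^ i) g =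
      averageDiff i g + (shift (gC ^ 2 ^ i) (g - average i g) - (g - average i g)) := by
    simp only [averageDiff, diff_apply, map_sub, Module.End.mul_apply]
    abel
  have hu : lpSeminorm hp (zone r R) (g - average i g) ≤
      1 / 2 * ∑ l ∈ Finset.range i, lpSeminorm hp (zone r R) (averageDiff l g) := by
    rw [show g - average i g = (1 - average i : Module.End ℝ (DH → X)) g from rfl,
      one_sub_average, LinearMap.smul_apply, map_smul_eq_mul, LinearMap.sum_apply,
      show ‖(-1 / 2 : ℝ)‖ = 1 / 2 by norm_num]
    gcongr
    exact Finset.le_sum_of_subadditive _ (map_zero _).le (map_add_le_add _) _ _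
  rw [hsplit, Finset.sum_range_succ]
  have h1 := map_add_le_add (lpSeminorm hp (zone r m)) (averageDiff i g)
    (shift (gC ^ 2 ^ i) (g - average i g) - (g - average i g))
  have h2 := map_sub_le_add (lpSeminorm hp (zone r m)) (shift (gC ^ 2 ^ i) (g - average i g))
    (g - average i g)
  have h3 := (lpSeminorm_zone_shift_gC_pow_le hp r m (2 ^ i) (g - average i g)).trans
    (lpSeminorm_zone_mono hp le_rfl hm _)
  have h4 := lpSeminorm_zone_mono hp (le_refl r) (by lia : m ≤ R) (g - average i g)
  have h5 := lpSeminorm_zone_mono hp (le_refl r) (by lia : m ≤ R) (averageDiff i g)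
  linarith

lemma lpSeminorm_diff_pow_le {r m R k j : ℕ} (hk : k < 2 ^ j) (hm : m + k ≤ R) (g : DH → X) :
    lpSeminorm hp (zone r m) (diff (gC ^ k) g) ≤
      ∑ i ∈ Finset.range j, ∑ l ∈ Finset.range (i + 1),
        lpSeminorm hp (zone r R) (averageDiff l g) := by
  induction j generalizing k with
  | zero =>
    obtain rfl : k = 0 := by simpa using hk
    simp [diff]
  | succ j ih =>
    rw [Finset.sum_range_succ]
    rcases lt_or_ge k (2 ^ j) with hkj | hkj
    · exact (ih hkj hm).trans (le_add_of_nonneg_right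
        (Finset.sum_nonneg fun l _ ↦ apply_nonneg _ _))
    · obtain ⟨k', rfl⟩ := Nat.exists_eq_add_of_le' hkj
      have hk' : k' < 2 ^ j := by rw [pow_succ] at hk; lia
      have hsplit : diff (gC ^ (k' + 2 ^ j)) g =
          diff (gC ^ k') g + shift (gC ^ k') (diff (gC ^ 2 ^ j) g) := by
        simp [diff_apply, pow_add]
      rw [hsplit]
      refine (map_add_le_add _ _ _).trans (add_le_add (ih hk' (by lia)) ?_)
      exact (lpSeminorm_zone_shift_gC_pow_le hp r m k' _).trans
        (lpSeminorm_diff_two_pow_le hp (by lia) g)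

lemma isWord_gC_two_pow (j : ℕ) : IsWord (2 * (2 ^ (j / 2) + 2 ^ ((j + 1) / 2))) (gC ^ 2 ^ j) := by
  have h := isWord_gC_pow_mul (2 ^ (j / 2)) (2 ^ ((j + 1) / 2))
  rwa [← pow_add, show j / 2 + (j + 1) / 2 = j by lia] at h

/-- A vertical difference of step `2 ^ j` costs `O (2 ^ (j / 2))` horizontal differences. -/
lemma pow_mul_lpSeminorm_diff_two_pow_le {ρ : ℝ} (hρ0 : 0 ≤ ρ) (hρ : ρ ^ 2 = 1 / 2) {n j : ℕ}
    (hj : 2 ^ j ≤ n ^ 2) (r m : ℕ) (g : DH → X) :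
    ρ ^ j * lpSeminorm hp (zone r m) (diff (gC ^ 2 ^ j) g) ≤
      6 * horizontal hp (zone (r + 6 * n) m) g := by
  have hρ1 : ρ ≤ 1 := by nlinarith
  have hlen : 2 * (2 ^ (j / 2) + 2 ^ ((j + 1) / 2)) ≤ 6 * n := by
    have h1 : 2 ^ (j / 2) ≤ n := by
      refine (Nat.pow_le_pow_iff_left two_ne_zero).1 (le_trans ?_ hj)
      rw [← pow_mul]
      exact Nat.pow_le_pow_right two_pos (Nat.div_mul_le_self j 2)
    have h2 : 2 ^ ((j + 1) / 2) ≤ 2 * 2 ^ (j / 2) := by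
      rw [← pow_succ']
      exact Nat.pow_le_pow_right two_pos (by lia)
    lia
  have hcost : ρ ^ j * (2 * (2 ^ (j / 2) + 2 ^ ((j + 1) / 2)) : ℕ) ≤ 6 := by
    have hpow (i : ℕ) : ρ ^ (2 * i) * 2 ^ i = 1 := by
      rw [pow_mul, hρ, ← mul_pow]
      norm_num
    push_cast
    obtain ⟨i, rfl | rfl⟩ := j.even_or_odd'
    · rw [show 2 * i / 2 = i by lia, show (2 * i + 1) / 2 = i by lia]
      linarith [hpow i]
    · rw [show (2 * i + 1) / 2 = i by lia, show (2 * i + 1 + 1) / 2 = i + 1 by lia]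
      calc _ = 6 * ρ * (ρ ^ (2 * i) * 2 ^ i) := by ring
        _ ≤ 6 := by rw [hpow]; linarith
  have hH := horizontal_nonneg hp (zone (r + 6 * n) m) g
  calc _ ≤ ρ ^ j * ((2 * (2 ^ (j / 2) + 2 ^ ((j + 1) / 2)) : ℕ) *
        horizontal hp (zone (r + 6 * n) m) g) := by
        gcongr
        refine (lpSeminorm_zone_diff_word_le hp (isWord_gC_two_pow j) r m g).trans ?_
        gcongr
        exact horizontal_zone_mono hp (by lia) le_rfl g
    _ ≤ _ := by
        rw [← mul_assoc]
        gcongr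

lemma rpow_le_of_le_six_mul_add {q x a b : ℝ} (hq : 1 ≤ q) (hx : 0 ≤ x) (ha : 0 ≤ a) (hb : 0 ≤ b)
    (h : x ≤ 6 * (a + b)) : x ^ q ≤ 12 ^ q * (a ^ q + b ^ q) := by
  refine (Real.rpow_le_rpow hx h (by linarith)).trans ?_
  rw [Real.mul_rpow (by norm_num) (by positivity), show (12 : ℝ) = 6 * 2 by norm_num,
    Real.mul_rpow (by norm_num) zero_le_two, mul_assoc]
  gcongr
  exact rpow_add_le_two_rpow_mul hq ha hb

/-- Vertical differences up to height `n ^ 2` are controlled by horizontal differences. -/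
lemma sum_lpSeminorm_diff_gC_pow_le {κ q ρ : ℝ} (hp1 : 1 < p) (hq : 1 ≤ q)
    (hκ : ∀ (s : Finset DH) (u v : DH → X) (P : ℝ), ∑ i ∈ s, ‖u i‖ ^ p ≤ P →
        ∑ i ∈ s, ‖v i‖ ^ p ≤ P →
          (∑ i ∈ s, ‖(1 / 2 : ℝ) • (u i + v i)‖ ^ p) ^ (q / p) +
            κ * (∑ i ∈ s, ‖u i - v i‖ ^ p) ^ (q / p) ≤ P ^ (q / p)) (hκ0 : 0 < κ)
    (hρ : ρ = (2 : ℝ) ^ (-(1 / 2) : ℝ)) {n : ℕ} (hn : 0 < n) (f : DH → X) :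
    ∑ k ∈ Finset.Icc 1 (n ^ 2),
        (k : ℝ) ^ (-1 - q / 2) * lpSeminorm hp1.le (zone n 0) (diff (gC ^ k) f) ^ q ≤
      ((1 - ρ) ^ (-q)) ^ 3 * (12 ^ q * (1 + κ⁻¹)) *
        (lpSeminorm hp1.le (zone (7 * n) (3 * n ^ 2)) (diff gA f) ^ q +
          lpSeminorm hp1.le (zone (7 * n) (3 * n ^ 2)) (diff gB f) ^ q) := by
  have hq0 : 0 ≤ q := by linarith
  have hρ0 : 0 < ρ := by rw [hρ]; positivity
  have hρ2 : ρ ^ 2 = 1 / 2 := by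
    rw [hρ, ← Real.rpow_natCast, ← Real.rpow_mul zero_le_two]
    norm_num [Real.rpow_neg_one]
  have hρI : ρ ∈ Set.Ioo (0 : ℝ) 1 := ⟨hρ0, by nlinarith⟩
  have hC : 0 ≤ (1 - ρ) ^ (-q) := Real.rpow_nonneg (by linarith [hρI.2]) _
  set C := (1 - ρ) ^ (-q)
  set J := Nat.log 2 (n ^ 2) with hJ
  have hpowJ : 2 ^ J ≤ n ^ 2 := Nat.pow_log_le_self 2 (by positivity)
  have hpowj {j : ℕ} (hj : j ≤ J) : 2 ^ j ≤ n ^ 2 := (Nat.pow_le_pow_right two_pos hj).trans hpowJ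
  set A := lpSeminorm hp1.le (zone (7 * n) (3 * n ^ 2)) (diff gA f)
  set B := lpSeminorm hp1.le (zone (7 * n) (3 * n ^ 2)) (diff gB f)
  have hA : 0 ≤ A := apply_nonneg _ _
  have hB : 0 ≤ B := apply_nonneg _ _
  set e : ℕ → ℝ := fun l ↦ lpSeminorm hp1.le (zone n (n ^ 2)) (averageDiff l f)
  have he (l) : 0 ≤ e l := apply_nonneg _ _
  set D : ℕ → ℝ := fun j ↦ ∑ i ∈ Finset.range (j + 1), ∑ l ∈ Finset.range (i + 1), e l
  set F : ℕ → ℝ := fun j ↦ ρ ^ j *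
    lpSeminorm hp1.le (zone n (2 * n ^ 2)) (diff (gC ^ 2 ^ j) (averageDiff j f))
  have hF (j) : 0 ≤ F j := mul_nonneg (by positivity) (apply_nonneg _ _)
  set α : DH → ℕ → ℝ := fun h j ↦
    lpSeminorm hp1.le (zone (7 * n) (2 * n ^ 2)) (averageDiff j (diff h f))
  have hdyadic := sum_Icc_rpow_mul_le (d := fun k ↦ lpSeminorm hp1.le (zone n 0) (diff (gC ^ k) f))
    (D := D) (R := n ^ 2) hρ hq0 (fun k ↦ apply_nonneg _ _)
    (fun j ↦ Finset.sum_nonneg fun i _ ↦ Finset.sum_nonneg fun l _ ↦ he l)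
    (fun k hk ↦ lpSeminorm_diff_pow_le hp1.le (Nat.lt_pow_succ_log_self one_lt_two k)
      (by simpa using (Finset.mem_Icc.1 hk).2) f)
  have hhardy₁ := sum_rpow_partial_sum_le hρI hq
    (e := fun i ↦ ∑ l ∈ Finset.range (i + 1), e l)
    (fun i ↦ Finset.sum_nonneg fun l _ ↦ he l) (J + 1)
  have hhardy₂ := sum_rpow_partial_sum_le hρI hq he (J + 1)
  have hrec : ∀ j < J, ρ ^ j * e j ≤ ρ * (ρ ^ (j + 1) * e (j + 1)) + F j := by
    intro j hj
    have h1 := lpSeminorm_averageDiff_le hp1.le n (n ^ 2) j f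
    have h2 := lpSeminorm_zone_mono hp1.le (le_refl n)
      (by linarith [hpowj hj.le] : n ^ 2 + 2 ^ j ≤ 2 * n ^ 2)
      (diff (gC ^ 2 ^ j) (averageDiff j f))
    calc ρ ^ j * e j ≤ ρ ^ j * (1 / 2 * e (j + 1) +
          lpSeminorm hp1.le (zone n (2 * n ^ 2)) (diff (gC ^ 2 ^ j) (averageDiff j f))) := by
          gcongr
          exact h1.trans (by gcongr)
      _ = _ := by
          rw [← hρ2]
          ring
  have hhardy₃ := sum_rpow_le_of_backward_recursion hρI hq
    (fun j ↦ mul_nonneg (by positivity) (he j)) hF hrec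
  have hlast : (ρ ^ J * e J) ^ q ≤ 12 ^ q * (A ^ q + B ^ q) := by
    refine rpow_le_of_le_six_mul_add hq (mul_nonneg (by positivity) (he J)) hA hB ?_
    refine (pow_mul_lpSeminorm_diff_two_pow_le hp1.le hρ0.le hρ2 hpowJ n (n ^ 2)
      (average J f)).trans ?_
    have hav (h : DH) : lpSeminorm hp1.le (zone (n + 6 * n) (n ^ 2)) (diff h (average J f)) ≤
        lpSeminorm hp1.le (zone (7 * n) (3 * n ^ 2)) (diff h f) := by
      rw [← average_apply_diff]
      exact (lpSeminorm_zone_average_le hp1.le _ _ _ _).trans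
        (lpSeminorm_zone_mono hp1.le (by lia) (by lia) _)
    gcongr
    exact add_le_add (hav gA) (hav gB)
  have hFle {j : ℕ} (hj : j < J) : F j ^ q ≤ 12 ^ q * (α gA j ^ q + α gB j ^ q) := by
    refine rpow_le_of_le_six_mul_add hq (hF j) (apply_nonneg _ _) (apply_nonneg _ _) ?_
    have h := pow_mul_lpSeminorm_diff_two_pow_le hp1.le hρ0.le hρ2 (hpowj hj.le) n (2 * n ^ 2)
      (averageDiff j f)
    rw [horizontal, ← averageDiff_apply_diff j gA, ← averageDiff_apply_diff j gB,
      show n + 6 * n = 7 * n by ring] at h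
    exact h
  have hα (h : DH) : ∑ j ∈ Finset.range J, α h j ^ q ≤
      κ⁻¹ * lpSeminorm hp1.le (zone (7 * n) (3 * n ^ 2)) (diff h f) ^ q := by
    rw [← div_eq_inv_mul, le_div_iff₀' hκ0]
    have h1 := sum_averageDiff_le hp1 hq0 hκ hκ0.le (7 * n) (2 * n ^ 2) J (diff h f)
    have h2 := Real.rpow_le_rpow (apply_nonneg _ _) (lpSeminorm_zone_mono hp1.le (le_refl (7 * n))
      (by lia : 2 * n ^ 2 + 2 ^ J ≤ 3 * n ^ 2) (diff h f)) hq0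
    have h3 : 0 ≤ lpSeminorm hp1.le (zone (7 * n) (2 * n ^ 2)) (average J (diff h f)) ^ q :=
      Real.rpow_nonneg (apply_nonneg _ _) q
    linarith
  have hFsum : ∑ j ∈ Finset.range J, F j ^ q ≤ 12 ^ q * (κ⁻¹ * (A ^ q + B ^ q)) := by
    refine (Finset.sum_le_sum fun j hj ↦ hFle (Finset.mem_range.1 hj)).trans ?_
    rw [← Finset.mul_sum, Finset.sum_add_distrib, mul_add κ⁻¹]
    gcongr
    exacts [hα gA, hα gB]
  calc _ ≤ ∑ j ∈ Finset.range (J + 1), (ρ ^ j * D j) ^ q := hdyadic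
    _ ≤ C * (C * ∑ j ∈ Finset.range (J + 1), (ρ ^ j * e j) ^ q) :=
        hhardy₁.trans (mul_le_mul_of_nonneg_left hhardy₂ hC)
    _ ≤ C * (C * (C * (12 ^ q * (A ^ q + B ^ q) + 12 ^ q * (κ⁻¹ * (A ^ q + B ^ q))))) := by
        gcongr
        exact hhardy₃.trans (by gcongr)
    _ = _ := by ring

end Operators

end DH

open DH in
/-- Theorem 3.1: the local `(p,q)` vertical-versus-horizontal Poincaré inequality
on the discrete Heisenberg group. -/
theorem local_pq_poincare (η : ℝ) (hη : η ∈ Set.Ioo (0 : ℝ) 1)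
    (q p : ℝ) (hq : 2 ≤ q) (hp : 1 < p) (hpq : p ≤ q) :
    ∃ K : ℝ, 0 < K ∧
      ∀ (X : Type) [NormedAddCommGroup X] [NormedSpace ℝ X] [CompleteSpace X],
        (∀ ε ∈ Set.Ioo (0 : ℝ) 1, ∀ x y : X, ‖x‖ = 1 → ‖y‖ = 1 → ε ≤ ‖x - y‖ →
          ‖x + y‖ ≤ 2 * (1 - (η * ε) ^ q)) →
        ∀ (n : ℕ) (f : DH → X),
          (∑ k ∈ Finset.Icc 1 (n ^ 2),
              (k : ℝ) ^ (-1 - q / 2) *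
                (∑' x : Ball n, ‖f (↑x * gC ^ k) - f ↑x‖ ^ p) ^ (q / p)) ^ (1 / q) ≤
            K * (∑' x : Ball (21 * n),
              (‖f (↑x * gA) - f ↑x‖ ^ p + ‖f (↑x * gB) - f ↑x‖ ^ p)) ^ (1 / p) := by
  obtain ⟨κ, hκ0, hκ⟩ := exists_two_point_sum hη.1 hp hq hpq
  set ρ : ℝ := (2 : ℝ) ^ (-(1 / 2) : ℝ) with hρ
  have hρ1 : ρ < 1 := Real.rpow_lt_one_of_one_lt_of_neg one_lt_two (by norm_num)
  have h1ρ : 0 < 1 - ρ := by linarith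
  set M := ((1 - ρ) ^ (-q)) ^ 3 * (12 ^ q * (1 + κ⁻¹)) * 2
  have hM : 0 < M := by positivity
  refine ⟨M ^ (1 / q), by positivity, fun X _ _ _ hX n f ↦ ?_⟩
  have htsum (n : ℕ) (F : DH → ℝ) : ∑' x : Ball n, F x = ∑ x ∈ (finite_Ball n).toFinset, F x := by
    rw [← Finset.tsum_subtype' _ F, (finite_Ball n).coe_toFinset]
  rw [htsum (21 * n) fun x ↦ ‖f (x * gA) - f x‖ ^ p + ‖f (x * gB) - f x‖ ^ p]
  set S := ∑ x ∈ (finite_Ball (21 * n)).toFinset,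
    (‖f (x * gA) - f x‖ ^ p + ‖f (x * gB) - f x‖ ^ p)
  have hS : 0 ≤ S := Finset.sum_nonneg fun x _ ↦ by positivity
  rcases n.eq_zero_or_pos with rfl | hn
  · have hq0 : 1 / q ≠ 0 := by positivity
    simp only [ne_eq, OfNat.ofNat_ne_zero, not_false_eq_true, zero_pow, zero_lt_one,
      Finset.Icc_eq_empty_of_lt, Finset.sum_empty, Real.zero_rpow hq0]
    positivity
  have hvert (k : ℕ) : (∑' x : Ball n, ‖f (↑x * gC ^ k) - f ↑x‖ ^ p) ^ (q / p) =
      lpSeminorm hp.le (zone n 0) (diff (gC ^ k) f) ^ q := by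
    rw [lpSeminorm_rpow, zone_zero, htsum n fun x ↦ ‖f (x * gC ^ k) - f x‖ ^ p]
    rfl
  have hhor (h : DH) (hh : ∀ x, ‖f (x * h) - f x‖ ^ p ≤
      ‖f (x * gA) - f x‖ ^ p + ‖f (x * gB) - f x‖ ^ p) :
      lpSeminorm hp.le (zone (7 * n) (3 * n ^ 2)) (diff h f) ^ q ≤ (S ^ (1 / p)) ^ q := by
    have hsub : zone (7 * n) (3 * n ^ 2) ⊆ (finite_Ball (21 * n)).toFinset :=
      (zone_subset_Ball hn).trans (Set.Finite.toFinset_subset_toFinset.2 fun x hx ↦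
        mem_Ball_iff.2 ((mem_Ball_iff.1 hx).mono (by lia)))
    refine Real.rpow_le_rpow (apply_nonneg _ _) ((lpSeminorm_mono hp.le hsub _).trans ?_)
      (by linarith)
    exact Real.rpow_le_rpow (Finset.sum_nonneg fun x _ ↦ by positivity)
      (Finset.sum_le_sum fun x _ ↦ hh x) (by positivity)
  have hA := hhor gA fun x ↦ le_add_of_nonneg_right (by positivity)
  have hB := hhor gB fun x ↦ le_add_of_nonneg_left (by positivity)
  have hmain := sum_lpSeminorm_diff_gC_pow_le hp (by linarith) (hκ X hX) hκ0 hρ hn f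
  simp only [hvert]
  have hbound := hmain.trans (mul_le_mul_of_nonneg_left (add_le_add hA hB) (by positivity))
  rw [← two_mul, ← mul_assoc] at hbound
  refine (Real.rpow_le_rpow (Finset.sum_nonneg fun k _ ↦ ?_) hbound (by positivity)).trans_eq ?_
  · exact mul_nonneg (by positivity) (Real.rpow_nonneg (apply_nonneg _ _) q)
  · rw [Real.mul_rpow hM.le (by positivity), ← Real.rpow_mul (by positivity),
      mul_one_div_cancel (by linarith), Real.rpow_one]
end
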